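/- arXiv:1607.08137 — 2 statements merged into one kernel-verified Lean document; each statement's English description precedes it below -/
import Mathlib

section
/- Take k = 3, n = 5 and the weight vectors w¹ = (2,2,1), w² = (2,1,2), w³ = (1,2,2) in the Vandermonde-quotient construction. Then for every δ ≥ 0 the power series F_δ ∈ ℚ[[x₁,x₂,x₃]] is divisible by Δ = (x₁−x₂)(x₁−x₃)(x₂−x₃), and the resulting series I₀(q) = Σ_{δ≥0} a_δ q^δ with a_δ = (F_δ/Δ)(0) satisfies {θ⁴ − q(124θ⁴+242θ³+187θ²+66θ+9) + q²(123θ⁴−246θ³−787θ²−554θ−124) + q³(123θ⁴+738θ³+689θ²+210θ+12) − q⁴(124θ⁴+254θ³+205θ²+78θ+12) + q⁵(θ+1)⁴} I₀ = 0. -/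
noncomputable section
namespace Stmt7

/-- The multivariable power series ring `ℚ[[x₁,x₂,x₃]]`. -/
abbrev R := MvPowerSeries (Fin 3) ℚ

/-- The constant `a` in `R`. -/
def Cc (a : ℚ) : R := MvPowerSeries.C a

/-- The pairs `i < j`. -/
def pairs : Finset (Fin 3 × Fin 3) := Finset.univ.filter fun p => p.1 < p.2

/-- The Vandermonde element `Δ = ∏_{i<j}(x_i − x_j)`. -/
def Vand : R := ∏ p ∈ pairs, (MvPowerSeries.X p.1 - MvPowerSeries.X p.2)

/-- The weight vectors `w¹ = (2,2,1)`, `w² = (2,1,2)`, `w³ = (1,2,2)`. -/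
def ws : List (Fin 3 → ℕ) := [![2, 2, 1], ![2, 1, 2], ![1, 2, 2]]

/-- `n = 5`. -/
def n : ℕ := 5

/-- The term `T_d` of the Vandermonde-quotient construction. -/
def T (d : Fin 3 → ℕ) : R :=
  (∏ p ∈ pairs,
      (MvPowerSeries.X p.1 - MvPowerSeries.X p.2 + Cc ((d p.1 : ℚ) - (d p.2 : ℚ)))) *
    (ws.map fun w =>
      ∏ m ∈ Finset.Icc 1 (∑ j, w j * d j),
        ((∑ j, Cc ((w j : ℚ)) * MvPowerSeries.X j) + Cc (m : ℚ))).prod *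
    (∏ j, ∏ m ∈ Finset.Icc 1 (d j), (MvPowerSeries.X j + Cc (m : ℚ)) ^ n)⁻¹

/-- `F_δ = Σ_{d₁+d₂+d₃=δ} T_d`. -/
def F (δ : ℕ) : R :=
  ∑ d ∈ (Fintype.piFinset fun _ : Fin 3 => Finset.range (δ + 1)).filter
      (fun d => ∑ j, d j = δ), T d

/-- The Euler operator `θ = q·d/dq` on `ℚ[[q]]`. -/
def th (f : PowerSeries ℚ) : PowerSeries ℚ :=
  PowerSeries.mk fun d => (d : ℚ) * PowerSeries.coeff d f

/-! Restrict `F δ = Vand * G` to the line `(t, 0, -t)` modulo `t ^ 4`, where the Vandermonde product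
is `2 t ^ 3`, so that only the constant term of `G` survives. There `F δ` is a hypergeometric sum
over `|d| = δ` weighted by the Vandermonde product of `d + x`. Inserting suitable symmetric
polynomials into this sum gives two further moments, and telescoping shows that the triple obeys, in
`δ`, the symmetric square of the Apéry recursion for `ζ(2)`. Hence `(F δ / Vand)(0)` is the square
of the `δ`-th Apéry number, and the Picard–Fuchs equation is the recursion of these squares.

Divisibility by `x_i - x_j` holds because the sum is antisymmetric, hence vanishes on `x_i = x_j`.
-/

section HypergeometricSum

variable {ι Q : Type*} [Fintype ι] [CommRing Q]

/-- The one-variable hypergeometric factor `∏_{m ≤ N - k} (c - y + m) / ∏_{m ≤ k} (y + m) ^ s`; the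
denominator is a unit whenever `y` is nilpotent in a `ℚ`-algebra. -/
def hyperWeight (s N k : ℕ) (c y : Q) : Q :=
  (∏ m ∈ Finset.Icc 1 (N - k), (c - y + (m : Q))) *
    Ring.inverse (∏ m ∈ Finset.Icc 1 k, (y + (m : Q)) ^ s)

lemma hyperWeight_add_two {s N k : ℕ} (hk : k ≤ N) (c y : Q) :
    hyperWeight s (N + 2) k c y =
      hyperWeight s N k c y * ((c + N + 1 - (k + y)) * (c + N + 2 - (k + y))) := by
  obtain ⟨l, rfl⟩ := Nat.exists_eq_add_of_le hk
  have h₁ : k + l + 2 - k = l + 1 + 1 := by omega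
  rw [hyperWeight, hyperWeight, h₁, Nat.add_sub_cancel_left,
    Finset.prod_Icc_succ_top (Nat.le_add_left 1 _), Finset.prod_Icc_succ_top (Nat.le_add_left 1 _)]
  push_cast
  ring

lemma isUnit_add_natCast_of_isNilpotent [Algebra ℚ Q] {y : Q} (hy : IsNilpotent y) {m : ℕ}
    (hm : m ≠ 0) : IsUnit (y + (m : Q)) := by
  have hm' : IsUnit (m : Q) := by
    simpa using (IsUnit.mk0 (m : ℚ) (Nat.cast_ne_zero.2 hm)).map (algebraMap ℚ Q)
  exact hy.isUnit_add_right_of_commute hm' (Commute.all _ _)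

lemma hyperWeight_succ_mul_pow [Algebra ℚ Q] {s N k : ℕ} (hk : k ≤ N) (c : Q) {y : Q}
    (hy : IsNilpotent y) :
    hyperWeight s (N + 2) (k + 1) c y * ((k + y) + 1) ^ s =
      hyperWeight s N k c y * (c + N + 1 - (k + y)) := by
  have hunit : IsUnit ((y + ((k + 1 : ℕ) : Q)) ^ s) :=
    (isUnit_add_natCast_of_isNilpotent hy k.succ_ne_zero).pow s
  have hbase : (k + y) + 1 = y + ((k + 1 : ℕ) : Q) := by push_cast; ring
  obtain ⟨l, rfl⟩ := Nat.exists_eq_add_of_le hk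
  have hsub : k + l + 2 - (k + 1) = l + 1 := by omega
  rw [hyperWeight, hyperWeight, hsub, Nat.add_sub_cancel_left,
    Finset.prod_Icc_succ_top (Nat.le_add_left 1 _), Finset.prod_Icc_succ_top (Nat.le_add_left 1 _),
    Ring.mul_inverse_rev, hbase, mul_assoc, mul_right_comm (Ring.inverse _),
    Ring.inverse_mul_cancel _ hunit, one_mul]
  push_cast
  ring

lemma sum_natCast_add {d : ι → ℕ} {δ : ℕ} (hd : ∑ j, d j = δ) (x : ι → Q) :
    ∑ j, ((d j : Q) + x j) = δ + ∑ j, x j := by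
  rw [Finset.sum_add_distrib, ← Nat.cast_sum, hd]

variable [DecidableEq ι]

/-- The sum of `p (d + x)` over `|d| = δ` against the hypergeometric weight
`∏_{j, m ≤ 2 δ - d_j} (2 ∑ x - x_j + m) / ∏_{j, m ≤ d_j} (x_j + m) ^ s`. -/
def hyperSum (s : ℕ) (x : ι → Q) (δ : ℕ) (p : (ι → Q) → Q) : Q :=
  ∑ d ∈ Finset.piAntidiag Finset.univ δ,
    (∏ j, hyperWeight s (2 * δ) (d j) (2 * ∑ l, x l) (x j)) * p (fun j => (d j : Q) + x j)

/-- The ratio of the hypergeometric weights at `z` on level `∑ z` and at `z + e_i` on level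
`∑ z + 1`, stripped of the factor `(z_i + 1) ^ s`. -/
def shiftRatio (i : ι) (z : ι → Q) : Q :=
  (2 * ∑ j, z j + 1 - z i) *
    ∏ j ∈ Finset.univ.erase i, ((2 * ∑ l, z l + 1 - z j) * (2 * ∑ l, z l + 2 - z j))

lemma sum_piAntidiag_succ {M : Type*} [AddCommMonoid M] (δ : ℕ) (i : ι) {g : (ι → ℕ) → M}
    (hg : ∀ d, d i = 0 → g d = 0) :
    ∑ d ∈ Finset.piAntidiag Finset.univ (δ + 1), g d =
      ∑ d ∈ Finset.piAntidiag Finset.univ δ, g (d + Pi.single i 1) := by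
  symm
  refine Finset.sum_of_injOn (· + Pi.single i 1) (add_left_injective _).injOn ?_ ?_ fun _ _ => rfl
  · intro d hd
    simp only [Finset.mem_coe, Finset.mem_piAntidiag] at hd ⊢
    simp [Finset.sum_add_distrib, hd]
  · intro d hd hd'
    by_contra hgd
    have hle : Pi.single i 1 ≤ d :=
      update_le_iff.2 ⟨Nat.one_le_iff_ne_zero.2 (mt (hg d) hgd), fun _ _ => Nat.zero_le _⟩
    refine hd' ⟨d - Pi.single i 1, ?_, tsub_add_cancel_of_le hle⟩
    rw [← tsub_add_cancel_of_le hle] at hd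
    simpa [Finset.sum_add_distrib] using hd

lemma hyperSum_congr {s δ : ℕ} {x : ι → Q} {p p' : (ι → Q) → Q}
    (h : ∀ z : ι → Q, ∑ j, z j = δ + ∑ j, x j → p z = p' z) :
    hyperSum s x δ p = hyperSum s x δ p' := by
  refine Finset.sum_congr rfl fun d hd => ?_
  rw [h _ (sum_natCast_add (Finset.mem_piAntidiag.1 hd).1 x)]

lemma hyperSum_finset_sum {κ : Type*} (s : ℕ) (x : ι → Q) (δ : ℕ) (S : Finset κ)
    (p : κ → (ι → Q) → Q) :
    hyperSum s x δ (fun z => ∑ a ∈ S, p a z) = ∑ a ∈ S, hyperSum s x δ (p a) := by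
  simp only [hyperSum, Finset.mul_sum]
  exact Finset.sum_comm

lemma hyperSum_add (s : ℕ) (x : ι → Q) (δ : ℕ) (p q : (ι → Q) → Q) :
    hyperSum s x δ (fun z => p z + q z) = hyperSum s x δ p + hyperSum s x δ q := by
  simp only [hyperSum, mul_add, Finset.sum_add_distrib]

lemma hyperSum_const_mul (s : ℕ) (x : ι → Q) (δ : ℕ) (c : Q) (p : (ι → Q) → Q) :
    hyperSum s x δ (fun z => c * p z) = c * hyperSum s x δ p := by
  simp only [hyperSum, Finset.mul_sum, mul_left_comm]

lemma hyperSum_zero (s : ℕ) (x : ι → Q) (p : (ι → Q) → Q) : hyperSum s x 0 p = p x := by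
  simp [hyperSum, hyperWeight]

lemma prod_hyperWeight_succ [Algebra ℚ Q] {s δ : ℕ} {x : ι → Q}
    (hnil : ∀ j, x j ^ s = 0) {d : ι → ℕ} (hd : ∑ j, d j = δ) (i : ι) :
    (∏ j, hyperWeight s (2 * (δ + 1)) ((d + Pi.single i 1 : ι → ℕ) j) (2 * ∑ l, x l) (x j)) *
        ((d i + x i) + 1) ^ s =
      (∏ j, hyperWeight s (2 * δ) (d j) (2 * ∑ l, x l) (x j)) *
        shiftRatio i (fun j => d j + x j) := by
  have hle : ∀ j, d j ≤ 2 * δ := fun j =>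
    (Finset.single_le_sum (fun _ _ => Nat.zero_le _) (Finset.mem_univ j)).trans (by omega)
  have hother : ∏ j ∈ Finset.univ.erase i,
      hyperWeight s (2 * (δ + 1)) ((d + Pi.single i 1 : ι → ℕ) j) (2 * ∑ l, x l) (x j) =
      ∏ j ∈ Finset.univ.erase i, (hyperWeight s (2 * δ) (d j) (2 * ∑ l, x l) (x j) *
        ((2 * (δ + ∑ l, x l) + 1 - (d j + x j)) * (2 * (δ + ∑ l, x l) + 2 - (d j + x j)))) := by
    refine Finset.prod_congr rfl fun j hj => ?_
    rw [mul_add_one, Pi.add_apply, Pi.single_eq_of_ne (Finset.ne_of_mem_erase hj), add_zero,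
      hyperWeight_add_two (hle j)]
    push_cast
    ring
  have hi := hyperWeight_succ_mul_pow (s := s) (hle i) (2 * ∑ l, x l) ⟨s, hnil i⟩
  rw [← Finset.mul_prod_erase _ _ (Finset.mem_univ i), hother, Finset.prod_mul_distrib,
    ← Finset.mul_prod_erase _ (fun j => hyperWeight s (2 * δ) (d j) (2 * ∑ l, x l) (x j))
      (Finset.mem_univ i), shiftRatio, sum_natCast_add hd, Pi.add_apply, Pi.single_eq_same,
    mul_add_one, mul_right_comm, hi]
  push_cast
  ring

lemma hyperSum_succ_shift [Algebra ℚ Q] {s : ℕ} {x : ι → Q}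
    (hnil : ∀ j, x j ^ s = 0) (δ : ℕ) (i : ι) (r : (ι → Q) → Q) :
    hyperSum s x (δ + 1) (fun z => z i ^ s * r (z - Pi.single i 1)) =
      hyperSum s x δ (fun z => shiftRatio i z * r z) := by
  rw [hyperSum, sum_piAntidiag_succ δ i fun d hd => by simp [hd, hnil]]
  refine Finset.sum_congr rfl fun d hd => ?_
  have hz : (fun j => (((d + Pi.single i 1 : ι → ℕ) j : ℕ) : Q) + x j) =
      (fun j => d j + x j) + Pi.single i 1 := by
    ext j
    simp [Pi.single_apply, add_right_comm]
  rw [hz, add_sub_cancel_right, ← mul_assoc, ← mul_assoc,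
    ← prod_hyperWeight_succ hnil (Finset.mem_piAntidiag.1 hd).1 i]
  simp

lemma hyperSum_sum_shift_eq_zero [Algebra ℚ Q] {s : ℕ} {x : ι → Q}
    (hnil : ∀ j, x j ^ s = 0) (δ : ℕ) {t : ι → (ι → Q) → Q} (ht : ∀ z, ∑ i, t i z = 0) :
    hyperSum s x δ (fun z => ∑ i, z i ^ s * ((2 * ∑ j, z j + 1 - z i) *
      t i (z - Pi.single i 1))) = 0 := by
  rw [hyperSum_finset_sum]
  cases δ with
  | zero => simp [hyperSum_zero, hnil]
  | succ δ =>
    have hshift (i : ι) : hyperSum s x (δ + 1) (fun z => z i ^ s *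
        ((2 * ∑ j, z j + 1 - z i) * t i (z - Pi.single i 1))) =
        hyperSum s x δ (fun z => shiftRatio i z * ((2 * ∑ j, z j + 2 - z i) * t i z)) := by
      rw [← hyperSum_succ_shift hnil]
      congr! 3 with z
      simp only [Pi.sub_apply, Finset.sum_sub_distrib, Finset.sum_pi_single', Finset.mem_univ,
        if_true, Pi.single_eq_same]
      ring
    have hratio (z : ι → Q) : ∑ i, shiftRatio i z * ((2 * ∑ j, z j + 2 - z i) * t i z) = 0 := by
      calc _ = ∑ i, (∏ j, ((2 * ∑ l, z l + 1 - z j) * (2 * ∑ l, z l + 2 - z j))) * t i z := by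
            refine Finset.sum_congr rfl fun i _ => ?_
            rw [← Finset.mul_prod_erase _ _ (Finset.mem_univ i), shiftRatio]
            ring
        _ = 0 := by rw [← Finset.mul_sum, ht, mul_zero]
    simp only [hshift, ← hyperSum_finset_sum, hratio]
    simp [hyperSum]

lemma hyperSum_succ_eq_of_certificate [Algebra ℚ Q] {s : ℕ} {x : ι → Q}
    (hnil : ∀ j, x j ^ s = 0) (δ m : ℕ) {g h : (ι → Q) → Q} {r t : ι → (ι → Q) → Q}
    (ht : ∀ z, ∑ i, t i z = 0)
    (hg : ∀ z, (∑ j, z j) ^ m * g z = ∑ i, z i ^ s * r i (z - Pi.single i 1))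
    (hh : ∀ z, (∑ j, z j + 1) ^ m * h z = ∑ i, shiftRatio i z * r i z +
      ∑ i, z i ^ s * ((2 * ∑ j, z j + 1 - z i) * t i (z - Pi.single i 1))) :
    hyperSum s x (δ + 1) g = hyperSum s x δ h := by
  have hunit : IsUnit (((δ : Q) + 1 + ∑ j, x j) ^ m) := by
    have hsum : IsNilpotent (∑ j, x j) := isNilpotent_sum fun j _ => ⟨s, hnil j⟩
    simpa [add_comm] using (isUnit_add_natCast_of_isNilpotent hsum δ.succ_ne_zero).pow m
  refine hunit.mul_left_cancel ?_
  calc ((δ : Q) + 1 + ∑ j, x j) ^ m * hyperSum s x (δ + 1) g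
      = hyperSum s x (δ + 1) (fun z => ∑ i, z i ^ s * r i (z - Pi.single i 1)) := by
        rw [← hyperSum_const_mul]
        refine hyperSum_congr fun z hz => ?_
        rw [← hg, hz, Nat.cast_succ]
    _ = hyperSum s x δ (fun z => ∑ i, shiftRatio i z * r i z) := by
        simp only [hyperSum_finset_sum, hyperSum_succ_shift hnil]
    _ = hyperSum s x δ (fun z => (∑ j, z j + 1) ^ m * h z) := by
        rw [← add_zero (hyperSum s x δ _), ← hyperSum_sum_shift_eq_zero hnil δ ht,
          ← hyperSum_add]
        simp only [hh]
    _ = ((δ : Q) + 1 + ∑ j, x j) ^ m * hyperSum s x δ h := by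
        rw [← hyperSum_const_mul]
        exact hyperSum_congr fun z hz => by rw [hz, add_right_comm]

lemma hyperSum_comp_perm (s : ℕ) (x : ι → Q) (δ : ℕ) (p : (ι → Q) → Q) (τ : Equiv.Perm ι) :
    hyperSum s (x ∘ τ) δ (fun z => p (z ∘ τ.symm)) = hyperSum s x δ p := by
  refine Finset.sum_nbij' (· ∘ τ.symm) (· ∘ τ) ?_ ?_ ?_ ?_ ?_
  · simp [Finset.mem_piAntidiag, Equiv.sum_comp]
  · simp [Finset.mem_piAntidiag, Equiv.sum_comp]
  · simp [Function.comp_assoc]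
  · simp [Function.comp_assoc]
  · intro d _
    congr 1
    · rw [← Equiv.prod_comp τ fun j => hyperWeight _ _ ((d ∘ τ.symm) j) _ _]
      simp [Equiv.sum_comp τ x]
    · simp [Function.comp_def]

end HypergeometricSum

section Moments

variable {Q : Type*} [CommRing Q]

/-- The Vandermonde product `∏_{i < j} (z_i - z_j)` of three elements. -/
def vandermondeProd (z : Fin 3 → Q) : Q := ∏ p ∈ pairs, (z p.1 - z p.2)

/-- The elementary symmetric function `e₂` of three elements. -/
def esymmTwo (z : Fin 3 → Q) : Q := z 0 * z 1 + z 1 * z 2 + z 2 * z 0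

/-- The elementary symmetric function `e₃` of three elements. -/
def esymmThree (z : Fin 3 → Q) : Q := z 0 * z 1 * z 2

/-- The sum of `∏_{i < j} (z_i - z_j) · p(e₁, e₂, e₃)` against the hypergeometric weight with
exponent `5`. -/
def moment (x : Fin 3 → Q) (δ : ℕ) (p : Q → Q → Q → Q) : Q :=
  hyperSum 5 x δ fun z => vandermondeProd z * p (∑ j, z j) (esymmTwo z) (esymmThree z)

/-- The antisymmetric telescoping certificate with numerator `P`, in direction `i`; the arguments
of `P` are `e₁, e₂, e₃` and `z_i`. The numerators used below come from solving a linear system for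
their coefficients. -/
def certificate (P : Q → Q → Q → Q → Q) (i : Fin 3) (z : Fin 3 → Q) : Q :=
  (z (i + 1) - z (i + 2)) * P (∑ j, z j) (esymmTwo z) (esymmThree z) (z i)

/-- The middle coefficient of the Apéry recursion `(δ + 1)² A' = aperyCoeff δ * A + B`,
`B' = (δ + 1)² A`. -/
def aperyCoeff (σ : Q) : Q := 11 * σ ^ 2 + 11 * σ + 3

/-- The polynomial in `e₁, e₂, e₃` whose moments are proportional to `A B`, in the notation of
`aperyCoeff`. -/
def crossPoly (σ e _f : Q) : Q := 5 * e - 3 * σ ^ 2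

/-- The polynomial in `e₁, e₂, e₃` whose moments are proportional to `B ^ 2`, in the notation of
`aperyCoeff`. -/
def squarePoly (σ e f : Q) : Q :=
  25 * f - 55 * σ ^ 2 * e - 50 * σ * e + 34 * σ ^ 4 + 25 * σ ^ 3

lemma vandermondeProd_eq (z : Fin 3 → Q) :
    vandermondeProd z = (z 0 - z 1) * (z 0 - z 2) * (z 1 - z 2) := by
  have hpairs : pairs = {(0, 1), (0, 2), (1, 2)} := by decide
  simp [vandermondeProd, hpairs, mul_assoc]

lemma shiftRatio_fin_three (i : Fin 3) (z : Fin 3 → Q) :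
    shiftRatio i z = (2 * ∑ j, z j + 1 - z i) *
      (((2 * ∑ j, z j + 1 - z (i + 1)) * (2 * ∑ j, z j + 2 - z (i + 1))) *
        ((2 * ∑ j, z j + 1 - z (i + 2)) * (2 * ∑ j, z j + 2 - z (i + 2)))) := by
  have herase : Finset.univ.erase i = {i + 1, i + 2} := by decide +revert
  rw [shiftRatio, herase, Finset.prod_pair (by simp)]

lemma sum_certificate_eq_zero (u v : Q → Q → Q → Q) (z : Fin 3 → Q) :
    ∑ i, certificate (fun σ e f a => u σ e f + v σ e f * a) i z = 0 := by
  simp only [certificate, Fin.sum_univ_three, Fin.isValue, Fin.reduceAdd, zero_add]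
  ring

lemma certificate_sub_single (P : Q → Q → Q → Q → Q) (i : Fin 3) (z : Fin 3 → Q) :
    certificate P i (z - Pi.single i 1) = (z (i + 1) - z (i + 2)) *
      P (∑ j, z j - 1) (esymmTwo z - (z (i + 1) + z (i + 2)))
        (esymmThree z - z (i + 1) * z (i + 2)) (z i - 1) := by
  have htwo : esymmTwo (z - Pi.single i 1) = esymmTwo z - (z (i + 1) + z (i + 2)) := by
    fin_cases i <;> simp [esymmTwo] <;> ring
  have hthree : esymmThree (z - Pi.single i 1) = esymmThree z - z (i + 1) * z (i + 2) := by
    fin_cases i <;> simp [esymmThree] <;> ring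
  simp [certificate, htwo, hthree]

lemma moment_add (x : Fin 3 → Q) (δ : ℕ) (p q : Q → Q → Q → Q) :
    moment x δ (fun σ e f => p σ e f + q σ e f) = moment x δ p + moment x δ q := by
  simp only [moment, mul_add, hyperSum_add]

lemma moment_zero (x : Fin 3 → Q) (p : Q → Q → Q → Q) :
    moment x 0 p = vandermondeProd x * p (∑ j, x j) (esymmTwo x) (esymmThree x) :=
  hyperSum_zero ..

lemma moment_mul_left (x : Fin 3 → Q) (δ : ℕ) (c : Q → Q) (p : Q → Q → Q → Q) :
    moment x δ (fun σ e f => c σ * p σ e f) = c (δ + ∑ j, x j) * moment x δ p := by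
  rw [moment, moment, ← hyperSum_const_mul]
  exact hyperSum_congr fun z hz => by rw [hz, mul_left_comm]

variable [Algebra ℚ Q] {x : Fin 3 → Q}

lemma moment_succ_of_certificate (hnil : ∀ j, x j ^ 5 = 0) (δ : ℕ)
    {g : Q → Q → Q → Q} {P : Q → Q → Q → Q → Q} {u v : Q → Q → Q → Q} (c₁ c₂ c₃ : Q → Q)
    (hg : ∀ z : Fin 3 → Q, (∑ j, z j) ^ 3 *
        (vandermondeProd z * g (∑ j, z j) (esymmTwo z) (esymmThree z)) =
      ∑ i, z i ^ 5 * certificate P i (z - Pi.single i 1))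
    (hh : ∀ z : Fin 3 → Q, (∑ j, z j + 1) ^ 3 * (vandermondeProd z * (c₁ (∑ j, z j) +
        c₂ (∑ j, z j) * crossPoly (∑ j, z j) (esymmTwo z) (esymmThree z) +
        c₃ (∑ j, z j) * squarePoly (∑ j, z j) (esymmTwo z) (esymmThree z))) =
      ∑ i, shiftRatio i z * certificate P i z +
      ∑ i, z i ^ 5 * ((2 * ∑ j, z j + 1 - z i) *
        certificate (fun σ e f a => u σ e f + v σ e f * a) i (z - Pi.single i 1))) :
    moment x (δ + 1) g =
      c₁ (δ + ∑ j, x j) * moment x δ 1 + c₂ (δ + ∑ j, x j) * moment x δ crossPoly +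
        c₃ (δ + ∑ j, x j) * moment x δ squarePoly := by
  rw [← moment_mul_left, ← moment_mul_left, ← moment_mul_left, ← moment_add, ← moment_add]
  refine hyperSum_succ_eq_of_certificate hnil δ 3 (sum_certificate_eq_zero u v) hg fun z => ?_
  rw [← hh]
  simp only [Pi.one_apply, mul_one]

lemma moment_crossPoly_succ (hnil : ∀ j, x j ^ 5 = 0) (δ : ℕ) :
    moment x (δ + 1) crossPoly =
      aperyCoeff (δ + ∑ j, x j) * moment x δ 1 + moment x δ crossPoly := by
  rw [moment_succ_of_certificate hnil δ aperyCoeff 1 0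
    (P := fun σ e _ a => -(5 * σ ^ 2 + 7 * σ + 3) + 2 * e + (σ + 1) * a + a ^ 2)
    (u := fun σ _ _ => 3 * σ + 7) (v := fun _ _ _ => 1)]
  · simp
  all_goals
    intro z
    simp only [certificate_sub_single]
    simp only [certificate, shiftRatio_fin_three, Fin.sum_univ_three, Fin.isValue, Fin.reduceAdd,
      zero_add, Pi.one_apply, Pi.zero_apply, vandermondeProd_eq, esymmTwo, crossPoly, aperyCoeff]
    ring

lemma moment_squarePoly_succ (hnil : ∀ j, x j ^ 5 = 0) (δ : ℕ) :
    moment x (δ + 1) squarePoly = (δ + ∑ j, x j + 1) ^ 4 * moment x δ 1 := by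
  rw [moment_succ_of_certificate hnil δ (fun σ => (σ + 1) ^ 4) 0 0
    (P := fun σ e f a =>
      65 * σ ^ 4 + 226 * σ ^ 3 + 331 * σ ^ 2 + 224 * σ + 59 - 5 * f
        - (31 * σ ^ 2 + 37 * σ + 21) * e + 10 * e ^ 2
        - (28 * σ ^ 3 + 54 * σ ^ 2 + 44 * σ + 13) * a + 5 * σ * e * a
        - (3 * σ ^ 2 + 11 * σ + 8) * a ^ 2 + 5 * e * a ^ 2)
    (u := fun σ e _ => 16 * σ ^ 3 + 103 * σ ^ 2 + 195 * σ + 91 + (15 * σ + 40) * e)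
    (v := fun σ e _ => 5 * e - (3 * σ ^ 2 + 22 * σ + 42))]
  · simp
  all_goals
    intro z
    simp only [certificate_sub_single]
    simp only [certificate, shiftRatio_fin_three, Fin.sum_univ_three, Fin.isValue, Fin.reduceAdd,
      zero_add, Pi.zero_apply, vandermondeProd_eq, esymmTwo, esymmThree, squarePoly]
    ring

lemma moment_one_succ (hnil : ∀ j, x j ^ 5 = 0) (δ : ℕ) :
    (δ + ∑ j, x j + 1) ^ 4 * moment x (δ + 1) 1 =
      aperyCoeff (δ + ∑ j, x j) ^ 2 * moment x δ 1 +
        2 * aperyCoeff (δ + ∑ j, x j) * moment x δ crossPoly + moment x δ squarePoly := by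
  have hpull := moment_mul_left x (δ + 1) (· ^ 4) 1
  rw [Nat.cast_succ, add_right_comm] at hpull
  rw [← hpull, moment_succ_of_certificate hnil δ
    (fun σ => aperyCoeff σ ^ 2) (fun σ => 2 * aperyCoeff σ) 1
    (P := fun σ e f a =>
      10 * σ ^ 4 + 14 * σ ^ 3 + 14 * σ ^ 2 + 6 * σ + 1 - 5 * f
        + (-9 * σ ^ 2 + 7 * σ + 1) * e + 10 * e ^ 2
        - (17 * σ ^ 3 + 21 * σ ^ 2 + 11 * σ + 2) * a + 5 * σ * e * a
        + (8 * σ ^ 2 + 11 * σ + 3) * a ^ 2 + 5 * e * a ^ 2)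
    (u := fun σ e _ => 49 * σ ^ 3 + 312 * σ ^ 2 + 635 * σ + 399 + (15 * σ + 40) * e)
    (v := fun σ e _ => 8 * σ ^ 2 + 22 * σ + 2 + 5 * e)]
  · simp
  all_goals
    intro z
    simp only [certificate_sub_single]
    simp only [certificate, shiftRatio_fin_three, Fin.sum_univ_three, Fin.isValue, Fin.reduceAdd,
      zero_add, Pi.one_apply, vandermondeProd_eq, esymmTwo, esymmThree, crossPoly, squarePoly,
      aperyCoeff]
    ring

theorem moment_eq_mul_vandermondeProd {a b : ℕ → Q} (ha : a 0 = 1) (hb : b 0 = 0)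
    (hab : ∀ k : ℕ, ((k : Q) + 1) ^ 2 * a (k + 1) = aperyCoeff (k : Q) * a k + b k)
    (hba : ∀ k : ℕ, b (k + 1) = ((k : Q) + 1) ^ 2 * a k) (hx : ∑ j, x j = 0)
    (hnil : ∀ j, x j ^ 5 = 0) (hV : ∀ j, vandermondeProd x * x j = 0) (δ : ℕ) :
    moment x δ 1 = a δ ^ 2 * vandermondeProd x ∧
      moment x δ crossPoly = a δ * b δ * vandermondeProd x ∧
      moment x δ squarePoly = b δ ^ 2 * vandermondeProd x := by
  induction δ with
  | zero =>
    simp only [moment_zero, hx, crossPoly, squarePoly, esymmTwo, esymmThree, ha, hb, Pi.one_apply]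
    refine ⟨by ring, ?_, ?_⟩
    · linear_combination 5 * (x 1 * hV 0 + x 2 * hV 1 + x 0 * hV 2)
    · linear_combination 25 * x 1 * x 2 * hV 0
  | succ δ ih =>
    obtain ⟨hone, hcross, hsquare⟩ := ih
    have hunit : IsUnit (((δ : Q) + 1) ^ 4) := by
      simpa using
        (isUnit_add_natCast_of_isNilpotent (Q := Q) IsNilpotent.zero δ.succ_ne_zero).pow 4
    refine ⟨hunit.mul_left_cancel ?_, ?_, ?_⟩
    · have hsucc := moment_one_succ hnil δ
      rw [hx, add_zero] at hsucc
      rw [hsucc, hone, hcross, hsquare]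
      linear_combination -vandermondeProd x *
        (((δ : Q) + 1) ^ 2 * a (δ + 1) + aperyCoeff (δ : Q) * a δ + b δ) * hab δ
    · rw [moment_crossPoly_succ hnil, hx, add_zero, hone, hcross, hba]
      linear_combination -vandermondeProd x * a δ * hab δ
    · rw [moment_squarePoly_succ hnil, hx, add_zero, hone, hba]
      ring

end Moments

section TermImages

variable {Q : Type*} [CommRing Q] [Algebra ℚ Q] (φ : R →ₐ[ℚ] Q)

lemma map_Cc (a : ℚ) : φ (Cc a) = algebraMap ℚ Q a := φ.commutes a

lemma map_inv_eq_inverse {u : R} (hu : MvPowerSeries.constantCoeff u ≠ 0) :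
    φ u⁻¹ = Ring.inverse (φ u) := by
  have hinv : φ u⁻¹ * φ u = 1 := by rw [← map_mul, MvPowerSeries.inv_mul_cancel _ hu, map_one]
  rw [← one_mul (Ring.inverse _),
    Ring.eq_mul_inverse_iff_mul_eq _ _ _ (IsUnit.of_mul_eq_one_right _ hinv), hinv]

lemma map_denominator_inv (d : Fin 3 → ℕ) :
    φ (∏ j, ∏ m ∈ Finset.Icc 1 (d j), (MvPowerSeries.X j + Cc (m : ℚ)) ^ n)⁻¹ =
      ∏ j, Ring.inverse (∏ m ∈ Finset.Icc 1 (d j), (φ (MvPowerSeries.X j) + (m : Q)) ^ 5) := by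
  have hconst : MvPowerSeries.constantCoeff
      (∏ j, ∏ m ∈ Finset.Icc 1 (d j), (MvPowerSeries.X j + Cc (m : ℚ)) ^ n) ≠ 0 := by
    simp only [map_prod, Finset.prod_ne_zero_iff, Finset.mem_Icc]
    intro j _ m hm
    simpa [Cc, n] using Nat.one_le_iff_ne_zero.1 hm.1
  rw [map_inv_eq_inverse φ hconst]
  simp only [← MonoidWithZero.inverse_apply, map_prod, map_pow, map_add, map_Cc, map_natCast, n]

lemma sum_ite_one_two_mul_add {ι S : Type*} [Fintype ι] [DecidableEq ι] [CommSemiring S]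
    (i : ι) (y : ι → S) : ∑ j, (if j = i then 1 else 2) * y j + y i = 2 * ∑ j, y j := by
  have hy : y i = ∑ j, if j = i then y j else 0 := by
    rw [Finset.sum_ite_eq' Finset.univ i y, if_pos (Finset.mem_univ i)]
  rw [hy, ← Finset.sum_add_distrib, Finset.mul_sum]
  refine Finset.sum_congr rfl fun j _ => ?_
  split_ifs <;> ring

lemma map_weightProduct (i : Fin 3) (d : Fin 3 → ℕ) :
    φ (∏ m ∈ Finset.Icc 1 (∑ j, (if j = i then 1 else 2) * d j),
        ((∑ j, Cc ((if j = i then 1 else 2 : ℕ) : ℚ) * MvPowerSeries.X j) + Cc (m : ℚ))) =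
      ∏ m ∈ Finset.Icc 1 (2 * ∑ j, d j - d i),
        (2 * ∑ j, φ (MvPowerSeries.X j) - φ (MvPowerSeries.X i) + (m : Q)) := by
  have hdeg : ∑ j, (if j = i then 1 else 2) * d j = 2 * ∑ j, d j - d i :=
    Nat.eq_sub_of_add_eq (sum_ite_one_two_mul_add i d)
  have hlin : φ (∑ j, Cc ((if j = i then 1 else 2 : ℕ) : ℚ) * MvPowerSeries.X j) =
      2 * ∑ j, φ (MvPowerSeries.X j) - φ (MvPowerSeries.X i) := by
    rw [← sum_ite_one_two_mul_add i, add_sub_cancel_right, map_sum]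
    refine Finset.sum_congr rfl fun j _ => ?_
    rw [map_mul, map_Cc, map_natCast, Nat.cast_ite, Nat.cast_one, Nat.cast_ofNat]
  simp only [hdeg, map_prod, map_add, hlin, map_Cc, map_natCast]

lemma ws_eq : ws = [2, 1, 0].map fun i j : Fin 3 => if j = i then 1 else 2 := by decide

lemma map_T (d : Fin 3 → ℕ) :
    φ (T d) = (∏ j, hyperWeight 5 (2 * ∑ l, d l) (d j) (2 * ∑ l, φ (MvPowerSeries.X l))
        (φ (MvPowerSeries.X j))) * vandermondeProd fun j => (d j : Q) + φ (MvPowerSeries.X j) := by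
  have hvand : φ (∏ p ∈ pairs, (MvPowerSeries.X p.1 - MvPowerSeries.X p.2 +
      Cc ((d p.1 : ℚ) - (d p.2 : ℚ)))) =
      vandermondeProd (fun j => (d j : Q) + φ (MvPowerSeries.X j)) := by
    simp only [map_prod, map_add, map_sub, map_Cc, map_natCast, vandermondeProd]
    exact Finset.prod_congr rfl fun p _ => by ring
  rw [T, map_mul, map_mul, hvand, map_denominator_inv, ws_eq]
  simp only [List.map_cons, List.map_nil, List.prod_cons, List.prod_nil, map_mul, mul_one,
    map_weightProduct, hyperWeight, Fin.prod_univ_three]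
  ring

lemma map_F (δ : ℕ) : φ (F δ) = moment (fun j => φ (MvPowerSeries.X j)) δ 1 := by
  have hindex : (Fintype.piFinset fun _ : Fin 3 => Finset.range (δ + 1)).filter
      (fun d => ∑ j, d j = δ) = Finset.piAntidiag Finset.univ δ := by
    ext d
    simp only [Finset.mem_filter, Fintype.mem_piFinset, Finset.mem_range, Nat.lt_succ_iff,
      Finset.mem_piAntidiag, Finset.mem_univ, implies_true, and_true, and_iff_right_iff_imp]
    rintro rfl j
    exact Finset.single_le_sum (fun _ _ => Nat.zero_le _) (Finset.mem_univ j)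
  rw [F, hindex, map_sum, moment, hyperSum]
  refine Finset.sum_congr rfl fun d hd => ?_
  rw [map_T, (Finset.mem_piAntidiag.1 hd).1, Pi.one_apply, Pi.one_apply, Pi.one_apply, mul_one]

end TermImages

section Antisymmetry

variable {Q : Type*} [CommRing Q]

lemma vandermondeProd_eq_neg_det (z : Fin 3 → Q) :
    vandermondeProd z = -(Matrix.vandermonde z).det := by
  simp only [vandermondeProd_eq, Matrix.det_fin_three, Matrix.vandermonde_apply,
    Fin.coe_ofNat_eq_mod]
  ring

lemma vandermondeProd_comp_swap (z : Fin 3 → Q) {i j : Fin 3} (hij : i ≠ j) :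
    vandermondeProd (z ∘ Equiv.swap i j) = -vandermondeProd z := by
  have hdet := Matrix.det_permute (Equiv.swap i j) (Matrix.vandermonde z)
  rw [Equiv.Perm.sign_swap hij, Units.val_neg, Units.val_one, Int.cast_neg, Int.cast_one,
    neg_one_mul] at hdet
  rw [vandermondeProd_eq_neg_det, vandermondeProd_eq_neg_det, ← hdet]
  rfl

lemma moment_one_eq_zero [Algebra ℚ Q] {x : Fin 3 → Q} {i j : Fin 3} (hij : i ≠ j)
    (hx : x i = x j) (δ : ℕ) : moment x δ 1 = 0 := by
  have hswap : x ∘ Equiv.swap i j = x := by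
    rw [Equiv.comp_swap_eq_update, hx, Function.update_eq_self, ← hx, Function.update_eq_self]
  have hneg : moment x δ 1 = -moment x δ 1 := by
    conv_lhs => rw [moment, ← hyperSum_comp_perm _ _ _ _ (Equiv.swap i j), hswap, Equiv.symm_swap]
    simp only [vandermondeProd_comp_swap _ hij, Pi.one_apply, mul_one, moment]
    rw [← neg_one_mul, ← hyperSum_const_mul]
    simp only [neg_one_mul]
  have htwo : IsUnit (2 : Q) := by
    simpa using isUnit_add_natCast_of_isNilpotent (IsNilpotent.zero (R := Q)) two_ne_zero
  refine htwo.mul_left_cancel ?_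
  linear_combination hneg

end Antisymmetry

section Divisibility

open MvPowerSeries

variable {σ A : Type*} [DecidableEq σ] [CommRing A]

lemma prod_update_X_zero_pow (i : σ) (d : σ →₀ ℕ) :
    (d.prod fun s e => Function.update (X : σ → MvPowerSeries σ A) i 0 s ^ e) =
      if d i = 0 then monomial d 1 else 0 := by
  split_ifs with hdi
  · rw [monomial_one_eq]
    refine Finsupp.prod_congr fun s hs => ?_
    rw [Function.update_of_ne (ne_of_apply_ne d (hdi ▸ Finsupp.mem_support_iff.1 hs))]
  · exact Finset.prod_eq_zero (Finsupp.mem_support_iff.2 hdi) (by simp [hdi])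

variable [Finite σ]

lemma hasSubst_update_X (i : σ) {a : MvPowerSeries σ A} (ha : constantCoeff a = 0) :
    HasSubst (Function.update (X : σ → MvPowerSeries σ A) i a) := by
  refine hasSubst_of_constantCoeff_zero fun s => ?_
  rcases eq_or_ne s i with rfl | hs
  · simpa using ha
  · simp [hs]

lemma X_dvd_of_subst_update_zero_eq_zero {i : σ} {f : MvPowerSeries σ A}
    (hf : subst (Function.update (X : σ → MvPowerSeries σ A) i 0) f = 0) : X i ∣ f := by
  rw [X_dvd_iff]
  intro m hm
  have hcoeff := congrArg (coeff m) hf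
  rw [coeff_subst (hasSubst_update_X i (map_zero constantCoeff)), map_zero,
    finsum_eq_single _ m] at hcoeff
  · simpa [prod_update_X_zero_pow, hm] using hcoeff
  · intro d hd
    rw [prod_update_X_zero_pow]
    split_ifs <;> simp [coeff_monomial, hd.symm]

lemma X_sub_X_dvd_of_rename_eq_zero {i j : σ} (hij : i ≠ j) {f : MvPowerSeries σ A}
    (hf : rename (Function.update id i j) f = 0) : X i - X j ∣ f := by
  rw [rename_eq_subst, Function.comp_update, Function.comp_id] at hf
  have hadd := hasSubst_update_X (A := A) (a := X i + X j) i (by simp)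
  have hsub := hasSubst_update_X (A := A) (a := X i - X j) i (by simp)
  have hzero := hasSubst_update_X (A := A) i (map_zero constantCoeff)
  obtain ⟨g, hg⟩ : X i ∣ subst (Function.update X i (X i + X j : MvPowerSeries σ A)) f := by
    apply X_dvd_of_subst_update_zero_eq_zero
    rw [subst_comp_subst_apply hadd hzero]
    convert hf with s
    rcases eq_or_ne s i with rfl | hs
    · simp [subst_add hzero, subst_X hzero, hij.symm]
    · simp [hs, subst_X hzero]
  have hinverse : (fun s => subst (Function.update (X : σ → MvPowerSeries σ A) i (X i - X j))
      (Function.update (X : σ → MvPowerSeries σ A) i (X i + X j) s)) = X := by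
    ext1 s
    rcases eq_or_ne s i with rfl | hs
    · simp [subst_add hsub, subst_X hsub, hij.symm]
    · simp [hs, subst_X hsub]
  have hf' := congrArg (subst (Function.update (X : σ → MvPowerSeries σ A) i (X i - X j))) hg
  rw [subst_comp_subst_apply hadd hsub, subst_mul hsub, subst_X hsub, Function.update_self,
    hinverse, subst_self, id] at hf'
  exact ⟨_, hf'⟩

end Divisibility

section VandermondeDivisibility

open MvPowerSeries

lemma update_id_ne_update_id {σ : Type*} [LinearOrder σ] {p q : σ × σ} (hp : p.1 < p.2)
    (hq : q.1 < q.2) (hqp : q ≠ p) :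
    Function.update id p.1 p.2 q.1 ≠ Function.update id p.1 p.2 q.2 := by
  intro h
  simp only [Function.update_apply, id] at h
  split_ifs at h with h₁ h₂ h₂
  · exact hq.ne (h₁.trans h₂.symm)
  · exact hqp (Prod.ext h₁ h.symm)
  · exact (hp.trans_le (h ▸ hq.le.trans_eq h₂)).false
  · exact hq.ne h

lemma prod_X_sub_X_dvd_of_rename_eq_zero {σ A : Type*} [Finite σ] [LinearOrder σ] [CommRing A]
    [IsDomain A] {f : MvPowerSeries σ A} {s : Finset (σ × σ)} (hs : ∀ p ∈ s, p.1 < p.2)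
    (hf : ∀ p ∈ s, rename (Function.update id p.1 p.2) f = 0) :
    ∏ p ∈ s, (X p.1 - X p.2) ∣ f := by
  induction s using Finset.induction_on with
  | empty => simp
  | insert p s hps ih =>
    simp only [Finset.forall_mem_insert] at hs hf
    obtain ⟨g, rfl⟩ := ih hs.2 hf.2
    have hg : rename (Function.update id p.1 p.2) g = 0 := by
      have hmul := hf.1
      rw [map_mul, map_prod] at hmul
      refine (mul_eq_zero.1 hmul).resolve_left (Finset.prod_ne_zero_iff.2 fun q hq => ?_)
      rw [map_sub, rename_X, rename_X, sub_ne_zero, Ne, X_inj]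
      exact update_id_ne_update_id hs.1 (hs.2 q hq) (ne_of_mem_of_not_mem hq hps)
    rw [Finset.prod_insert hps, mul_comm]
    exact mul_dvd_mul_left _ (X_sub_X_dvd_of_rename_eq_zero hs.1.ne hg)

theorem Vand_dvd_F (δ : ℕ) : Vand ∣ F δ := by
  have hlt : ∀ p ∈ pairs, p.1 < p.2 := fun p hp => (Finset.mem_filter.1 hp).2
  refine prod_X_sub_X_dvd_of_rename_eq_zero hlt fun p hp => ?_
  rw [map_F]
  exact moment_one_eq_zero (hlt p hp).ne (by simp [(hlt p hp).ne']) δ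

end VandermondeDivisibility

section Apery

/-- The Apéry numbers `∑ k, (m.choose k) ^ 2 * (m + k).choose k` of the irrationality proof for
`ζ(2)`, given by their recursion. -/
def apery : ℕ → ℚ
  | 0 => 1
  | 1 => 3
  | k + 2 => (aperyCoeff (k + 1 : ℚ) * apery (k + 1) + (k + 1) ^ 2 * apery k) / (k + 2) ^ 2

lemma succ_sq_mul_apery_succ (k : ℕ) :
    ((k : ℚ) + 1) ^ 2 * apery (k + 1) = aperyCoeff (k : ℚ) * apery k + k ^ 2 * apery (k - 1) := by
  cases k with
  | zero => norm_num [apery, aperyCoeff]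
  | succ k =>
    have hk : (k : ℚ) + 2 ≠ 0 := by positivity
    rw [apery, Nat.add_sub_cancel]
    push_cast
    field_simp
    ring

lemma sq_recurrence_of_apery_recurrence {A : Type*} [CommRing A] {a : ℕ → A}
    (ha : ∀ k : ℕ, ((k : A) + 1) ^ 2 * a (k + 1) = aperyCoeff (k : A) * a k + k ^ 2 * a (k - 1))
    (k : ℕ) :
    ((k : A) + 5) ^ 4 * a (k + 5) ^ 2 -
      (124 * ((k : A) + 4) ^ 4 + 242 * (k + 4) ^ 3 + 187 * (k + 4) ^ 2 + 66 * (k + 4) + 9) *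
        a (k + 4) ^ 2 +
      (123 * ((k : A) + 3) ^ 4 - 246 * (k + 3) ^ 3 - 787 * (k + 3) ^ 2 - 554 * (k + 3) - 124) *
        a (k + 3) ^ 2 +
      (123 * ((k : A) + 2) ^ 4 + 738 * (k + 2) ^ 3 + 689 * (k + 2) ^ 2 + 210 * (k + 2) + 12) *
        a (k + 2) ^ 2 -
      (124 * ((k : A) + 1) ^ 4 + 254 * (k + 1) ^ 3 + 205 * (k + 1) ^ 2 + 78 * (k + 1) + 12) *
        a (k + 1) ^ 2 +
      ((k : A) + 1) ^ 4 * a k ^ 2 = 0 := by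
  have h₁ := ha (k + 1)
  have h₂ := ha (k + 2)
  have h₃ := ha (k + 3)
  have h₄ := ha (k + 4)
  simp only [add_assoc, Nat.reduceAdd, Nat.cast_add, Nat.cast_one, Nat.cast_ofNat,
    Nat.add_one_sub_one, aperyCoeff] at h₁ h₂ h₃ h₄
  linear_combination (norm := (simp only [aperyCoeff]; ring))
    ((k + 5) ^ 2 * a (k + 5) + aperyCoeff (k + 4 : A) * a (k + 4) + (k + 4) ^ 2 * a (k + 3)) * h₄ +
    (2 * aperyCoeff (k + 4 : A) * a (k + 3) - 3 * ((k + 4) ^ 2 * a (k + 4) +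
      aperyCoeff (k + 3 : A) * a (k + 3) + (k + 3) ^ 2 * a (k + 2))) * h₃ +
    (2 * aperyCoeff (k + 1 : A) * a (k + 2) + 3 * ((k + 3) ^ 2 * a (k + 3) -
      aperyCoeff (k + 2 : A) * a (k + 2) + (k + 2) ^ 2 * a (k + 1))) * h₂ -
    ((k + 2) ^ 2 * a (k + 2) - aperyCoeff (k + 1 : A) * a (k + 1) + (k + 1) ^ 2 * a k) * h₁

end Apery

section ConstantTerm

/-- The truncated polynomial ring `ℚ[t]/(t⁴)`. -/
abbrev TruncatedLine := PowerSeries ℚ ⧸ Ideal.span {(PowerSeries.X : PowerSeries ℚ) ^ 4}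

/-- The class of the coordinate `t` in `ℚ[t]/(t⁴)`. -/
def truncatedCoord : TruncatedLine := Ideal.Quotient.mk _ PowerSeries.X

/-- The parametrised line `(t, 0, -t)`, on which `∑ x` vanishes and the Vandermonde product does
not. -/
def antidiagonalLine : Fin 3 → PowerSeries ℚ := ![PowerSeries.X, 0, -PowerSeries.X]

lemma constantCoeff_antidiagonalLine (i : Fin 3) :
    MvPowerSeries.constantCoeff (antidiagonalLine i) = 0 := by
  change PowerSeries.constantCoeff (antidiagonalLine i) = 0
  fin_cases i <;> simp [antidiagonalLine]

lemma hasSubst_antidiagonalLine : MvPowerSeries.HasSubst antidiagonalLine :=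
  MvPowerSeries.hasSubst_of_constantCoeff_zero constantCoeff_antidiagonalLine

/-- The restriction of power series to the line `(t, 0, -t)` modulo `t⁴`. -/
def restrictLine : R →ₐ[ℚ] TruncatedLine :=
  (Ideal.Quotient.mkₐ ℚ _).comp (MvPowerSeries.substAlgHom hasSubst_antidiagonalLine)

lemma restrictLine_apply (f : R) :
    restrictLine f = Ideal.Quotient.mk _ (MvPowerSeries.subst antidiagonalLine f) := by
  rw [← MvPowerSeries.coe_substAlgHom hasSubst_antidiagonalLine]
  rfl

lemma restrictLine_X (i : Fin 3) :
    restrictLine (MvPowerSeries.X i) = ![truncatedCoord, 0, -truncatedCoord] i := by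
  rw [restrictLine_apply, MvPowerSeries.subst_X hasSubst_antidiagonalLine]
  fin_cases i <;> simp [antidiagonalLine, truncatedCoord]

lemma sum_restrictLine_X : ∑ i, restrictLine (MvPowerSeries.X i) = 0 := by
  simp [Fin.sum_univ_three, restrictLine_X]

lemma truncatedCoord_pow_four : truncatedCoord ^ 4 = 0 := by
  rw [truncatedCoord, ← map_pow, Ideal.Quotient.eq_zero_iff_mem]
  exact Ideal.mem_span_singleton_self _

lemma restrictLine_X_pow_five (i : Fin 3) : restrictLine (MvPowerSeries.X i) ^ 5 = 0 := by
  have ht : truncatedCoord ^ 5 = 0 := pow_eq_zero_of_le (by decide) truncatedCoord_pow_four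
  rw [restrictLine_X]
  fin_cases i <;> simp [ht, neg_pow truncatedCoord]

lemma algebraMap_mul_truncatedCoord_cube {c : ℚ}
    (h : algebraMap ℚ TruncatedLine c * truncatedCoord ^ 3 = 0) : c = 0 := by
  have hmem : Ideal.Quotient.mk (Ideal.span {(PowerSeries.X : PowerSeries ℚ) ^ 4})
      (PowerSeries.C c * PowerSeries.X ^ 3) = 0 := by
    rw [map_mul, map_pow]
    exact h
  rw [Ideal.Quotient.eq_zero_iff_mem, Ideal.mem_span_singleton, PowerSeries.X_pow_dvd_iff] at hmem
  simpa [PowerSeries.coeff_X_pow] using hmem 3 (by norm_num)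

lemma vandermondeProd_restrictLine :
    vandermondeProd (fun i => restrictLine (MvPowerSeries.X i)) = 2 * truncatedCoord ^ 3 := by
  simp only [vandermondeProd_eq, restrictLine_X, Matrix.cons_val]
  ring

lemma vandermondeProd_restrictLine_mul (i : Fin 3) :
    vandermondeProd (fun i => restrictLine (MvPowerSeries.X i)) *
      restrictLine (MvPowerSeries.X i) = 0 := by
  rw [vandermondeProd_restrictLine, restrictLine_X]
  fin_cases i
  · simpa using by linear_combination 2 * truncatedCoord_pow_four
  · simp
  · simpa using by linear_combination -2 * truncatedCoord_pow_four

lemma exists_restrictLine_eq (G : R) : ∃ y, restrictLine G =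
    algebraMap ℚ TruncatedLine (MvPowerSeries.constantCoeff G) + truncatedCoord * y := by
  obtain ⟨H, hH⟩ : (PowerSeries.X : PowerSeries ℚ) ∣ MvPowerSeries.subst antidiagonalLine
      (G - Cc (MvPowerSeries.constantCoeff G)) := by
    rw [PowerSeries.X_dvd_iff]
    exact MvPowerSeries.constantCoeff_subst_eq_zero hasSubst_antidiagonalLine
      constantCoeff_antidiagonalLine (by simp [Cc])
  refine ⟨Ideal.Quotient.mk _ H, ?_⟩
  rw [truncatedCoord, ← map_mul, ← hH, ← restrictLine_apply, map_sub, map_Cc, add_sub_cancel]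

lemma restrictLine_F (δ : ℕ) :
    restrictLine (F δ) = algebraMap ℚ TruncatedLine (apery δ) ^ 2 * (2 * truncatedCoord ^ 3) := by
  have hrec (k : ℕ) : ((k : TruncatedLine) + 1) ^ 2 * algebraMap ℚ TruncatedLine (apery (k + 1)) =
      aperyCoeff (k : TruncatedLine) * algebraMap ℚ TruncatedLine (apery k) +
        algebraMap ℚ TruncatedLine (k ^ 2 * apery (k - 1)) := by
    have hmap := congrArg (algebraMap ℚ TruncatedLine) (succ_sq_mul_apery_succ k)
    simpa [aperyCoeff, map_ofNat (algebraMap ℚ TruncatedLine)] using hmap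
  have hmoment := moment_eq_mul_vandermondeProd
    (a := fun k => algebraMap ℚ TruncatedLine (apery k))
    (b := fun k => algebraMap ℚ TruncatedLine (k ^ 2 * apery (k - 1)))
    (by simp [apery]) (by simp) hrec (by simp) sum_restrictLine_X restrictLine_X_pow_five
    vandermondeProd_restrictLine_mul δ
  rw [map_F, hmoment.1, vandermondeProd_restrictLine]

theorem constantCoeff_eq_apery_sq {δ : ℕ} {G : R} (hG : F δ = Vand * G) :
    MvPowerSeries.constantCoeff G = apery δ ^ 2 := by
  have hV : restrictLine Vand = 2 * truncatedCoord ^ 3 := by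
    simp only [← vandermondeProd_restrictLine, Vand, vandermondeProd, map_prod, map_sub]
  obtain ⟨y, hy⟩ := exists_restrictLine_eq G
  have hline := congrArg restrictLine hG
  rw [restrictLine_F, map_mul, hV, hy] at hline
  have hzero : 2 * (MvPowerSeries.constantCoeff G - apery δ ^ 2) = 0 := by
    apply algebraMap_mul_truncatedCoord_cube
    rw [map_mul, map_sub, map_pow, map_ofNat]
    linear_combination -hline - 2 * y * truncatedCoord_pow_four
  linarith

end ConstantTerm

section PicardFuchs

/-- The fifth-degree Picard–Fuchs operator of the Calabi–Yau threefold `Λ²Q(1)` on `G(2,5)`, with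
`θ` written as `th` and multiplication by `q` as multiplication by `PowerSeries.X`. -/
def picardFuchsOperator (f : PowerSeries ℚ) : PowerSeries ℚ :=
  th^[4] f -
    PowerSeries.X * (124 * th^[4] f + 242 * th^[3] f + 187 * th^[2] f + 66 * th f + 9 * f) +
    PowerSeries.X ^ 2 * (123 * th^[4] f - 246 * th^[3] f - 787 * th^[2] f - 554 * th f - 124 * f) +
    PowerSeries.X ^ 3 * (123 * th^[4] f + 738 * th^[3] f + 689 * th^[2] f + 210 * th f + 12 * f) -
    PowerSeries.X ^ 4 * (124 * th^[4] f + 254 * th^[3] f + 205 * th^[2] f + 78 * th f + 12 * f) +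
    PowerSeries.X ^ 5 * (fun g => th g + g)^[4] f

lemma coeff_th (f : PowerSeries ℚ) (k : ℕ) :
    PowerSeries.coeff k (th f) = k * PowerSeries.coeff k f := by
  rw [th, PowerSeries.coeff_mk]

lemma coeff_ofNat_mul {A : Type*} [CommSemiring A] (m : ℕ) [m.AtLeastTwo] (f : PowerSeries A)
    (k : ℕ) : PowerSeries.coeff k ((ofNat(m) : PowerSeries A) * f) =
      ofNat(m) * PowerSeries.coeff k f := by
  rw [← map_ofNat (PowerSeries.C (R := A)) m, PowerSeries.coeff_C_mul]

lemma coeff_X_mul {A : Type*} [Semiring A] (f : PowerSeries A) (k : ℕ) :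
    PowerSeries.coeff k (PowerSeries.X * f) =
      if 1 ≤ k then PowerSeries.coeff (k - 1) f else 0 := by
  simpa using PowerSeries.coeff_X_pow_mul' f 1 k

theorem picardFuchsOperator_mk_apery_sq :
    picardFuchsOperator (PowerSeries.mk fun k => apery k ^ 2) = 0 := by
  ext k
  simp only [picardFuchsOperator, Function.iterate_succ, Function.iterate_zero,
    Function.comp_apply, id, map_add, map_sub, map_zero, coeff_X_mul,
    PowerSeries.coeff_X_pow_mul', coeff_th, coeff_ofNat_mul, PowerSeries.coeff_mk]
  rcases lt_or_ge k 5 with hk | hk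
  · interval_cases k <;> norm_num [apery, aperyCoeff]
  · obtain ⟨k, rfl⟩ := Nat.exists_eq_add_of_le' hk
    simp only [zero_le, le_add_iff_nonneg_left, if_true, Nat.add_sub_cancel, Nat.reduceSubDiff]
    push_cast
    linear_combination sq_recurrence_of_apery_recurrence succ_sq_mul_apery_succ k

end PicardFuchs

/-- every `F_δ` is divisible by `Δ`, and the series `I₀ = Σ (F_δ/Δ)(0) q^δ`
is annihilated by the Picard–Fuchs operator of Calabi–Yau No. 5 (`Λ²Q(1)` on `G(2,5)`). -/
theorem stmt_7 :
    (∀ δ : ℕ, ∃ G : R, F δ = Vand * G) ∧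
    (∀ G : ℕ → R, (∀ δ : ℕ, F δ = Vand * G δ) →
      ∀ I₀ : PowerSeries ℚ,
        I₀ = PowerSeries.mk (fun δ => MvPowerSeries.constantCoeff (G δ)) →
        th^[4] I₀ -
          PowerSeries.X * (124 * th^[4] I₀ + 242 * th^[3] I₀ + 187 * th^[2] I₀ +
            66 * th I₀ + 9 * I₀) +
          PowerSeries.X ^ 2 * (123 * th^[4] I₀ - 246 * th^[3] I₀ - 787 * th^[2] I₀ -
            554 * th I₀ - 124 * I₀) +
          PowerSeries.X ^ 3 * (123 * th^[4] I₀ + 738 * th^[3] I₀ + 689 * th^[2] I₀ +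
            210 * th I₀ + 12 * I₀) -
          PowerSeries.X ^ 4 * (124 * th^[4] I₀ + 254 * th^[3] I₀ + 205 * th^[2] I₀ +
            78 * th I₀ + 12 * I₀) +
          PowerSeries.X ^ 5 * ((fun g => th g + g) ((fun g => th g + g) ((fun g => th g + g)
            ((fun g => th g + g) I₀)))) = 0) := by
  refine ⟨Vand_dvd_F, ?_⟩
  rintro G hG I₀ rfl
  simp only [fun δ => constantCoeff_eq_apery_sq (hG δ)]
  exact picardFuchsOperator_mk_apery_sq

end Stmt7
end
end

section
/- Take k = 5, n = 7 and the weight vectors w¹,…,w⁵ the five vectors in ℤ⁵ with four coordinates 1 and one coordinate 0, w⁶ = (1,1,1,1,1), w⁷ = (2,2,2,2,2) in the Vandermonde-quotient construction. Then for every δ ≥ 0 the power series F_δ ∈ ℚ[[x₁,…,x₅]] is divisible by Δ = ∏_{1≤i<j≤5}(x_i−x_j), and the resulting series I₀(q) = Σ_{δ≥0} a_δ q^δ with a_δ = (F_δ/Δ)(0) satisfies {θ⁴ − 6q(2θ+1)²(3θ²+3θ+1) − 108q²(θ+1)²(2θ+1)(2θ+3)} I₀ = 0. -/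
noncomputable section
namespace Stmt8

/-- The multivariable power series ring `ℚ[[x₁,…,x_5]]`. -/
abbrev R := MvPowerSeries (Fin 5) ℚ

/-- The constant `a` in `R`. -/
def Cc (a : ℚ) : R := MvPowerSeries.C a

/-- The pairs `i < j`. -/
def pairs : Finset (Fin 5 × Fin 5) := Finset.univ.filter fun p => p.1 < p.2

/-- The Vandermonde element `Δ = ∏_{i<j}(x_i − x_j)`. -/
def Vand : R := ∏ p ∈ pairs, (MvPowerSeries.X p.1 - MvPowerSeries.X p.2)

/-- The weight vectors. -/
def ws : List (Fin 5 → ℕ) := [![0, 1, 1, 1, 1], ![1, 0, 1, 1, 1], ![1, 1, 0, 1, 1], ![1, 1, 1, 0, 1], ![1, 1, 1, 1, 0], ![1, 1, 1, 1, 1], ![2, 2, 2, 2, 2]]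

/-- `n = 7`. -/
def n : ℕ := 7

/-- The term `T_d` of the Vandermonde-quotient construction:
`T_d = ∏_{i<j}(x_i−x_j+d_i−d_j) · ∏_s ∏_{m=1}^{⟨wˢ,d⟩}(⟨wˢ,x⟩+m) · u_d⁻¹`. -/
def T (d : Fin 5 → ℕ) : R :=
  (∏ p ∈ pairs,
      (MvPowerSeries.X p.1 - MvPowerSeries.X p.2 + Cc ((d p.1 : ℚ) - (d p.2 : ℚ)))) *
    (ws.map fun w =>
      ∏ m ∈ Finset.Icc 1 (∑ j, w j * d j),
        ((∑ j, Cc ((w j : ℚ)) * MvPowerSeries.X j) + Cc (m : ℚ))).prod *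
    (∏ j, ∏ m ∈ Finset.Icc 1 (d j), (MvPowerSeries.X j + Cc (m : ℚ)) ^ n)⁻¹

/-- `F_δ = Σ_{d₁+⋯+d_k=δ} T_d`. -/
def F (δ : ℕ) : R :=
  ∑ d ∈ (Fintype.piFinset fun _ : Fin 5 => Finset.range (δ + 1)).filter
      (fun d => ∑ j, d j = δ), T d

/-- The Euler operator `θ = q·d/dq` on `ℚ[[q]]`. -/
def th (f : PowerSeries ℚ) : PowerSeries ℚ :=
  PowerSeries.mk fun d => (d : ℚ) * PowerSeries.coeff d f

/-!
`F N` is alternating in `x₁, …, x₅`, hence divisible by the Vandermonde determinant `Δ`. Pairing it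
with the alternating sum of the coefficients at the monomials of `Δ` gives `5!` times the constant
term of the quotient. This pairing kills all multiples of `x₁ + ⋯ + x₅`, and modulo `x₁ + ⋯ + x₅`
the weights of `Λ⁴S*` become `-xᵢ`, so that `T d` is `N! (2N)!` times a Vandermonde determinant in
the `xᵢ + dᵢ` and a product of one-variable factors. Thus `a_N / (N! (2N)!)` is the value at
`(1, X, …, X⁴)` of an alternating functional on polynomials in one variable.

Multiplying one of the arguments of this functional by `X` (summed over the arguments) multiplies
its value by `N`, and the case of a last argument `X ^ 7` reduces to level `N - 1`. Together these
determine its values at `(h, X h, …, X⁴ h)`, for `h` a product of two linear factors, from those at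
level `N - 1`. The recurrence has a unique solution, and the explicit one satisfies at `h = 1` a
three-term relation in `N`, which is the Picard–Fuchs equation.
-/

section Divisibility

variable {ι K : Type*} [CommRing K]

theorem X_sub_X_dvd_iff_rename_update_eq_zero [DecidableEq ι] {i j : ι} {p : MvPolynomial ι K} :
    MvPolynomial.X i - MvPolynomial.X j ∣ p ↔
      MvPolynomial.rename (Function.update id j i) p = 0 := by
  refine ⟨?_, fun hp => ?_⟩
  · rintro ⟨q, rfl⟩
    by_cases h : i = j
    · simp [h]
    · simp [Function.update_of_ne h]
  let π := Ideal.Quotient.mkₐ K (Ideal.span {(MvPolynomial.X i - MvPolynomial.X j :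
    MvPolynomial ι K)})
  have hij : π (MvPolynomial.X i) = π (MvPolynomial.X j) :=
    Ideal.Quotient.eq.2 (Ideal.mem_span_singleton_self _)
  have hπ : π.comp (MvPolynomial.rename (Function.update id j i)) = π := by
    refine MvPolynomial.algHom_ext fun k => ?_
    rw [AlgHom.comp_apply, MvPolynomial.rename_X]
    by_cases h : k = j
    · rw [h, Function.update_self, hij]
    · rw [Function.update_of_ne h, id]
  have hzero : π p = 0 := by rw [← hπ, AlgHom.comp_apply, hp, map_zero]
  exact Ideal.mem_span_singleton.1 (Ideal.Quotient.eq_zero_iff_mem.1 hzero)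

theorem X_sub_X_dvd_of_rename_swap_eq_neg [IsDomain K] [CharZero K] [DecidableEq ι] {i j : ι}
    {p : MvPolynomial ι K} (hp : MvPolynomial.rename (Equiv.swap i j) p = -p) :
    MvPolynomial.X i - MvPolynomial.X j ∣ p := by
  rw [X_sub_X_dvd_iff_rename_update_eq_zero, ← self_eq_neg, ← map_neg, ← hp,
    MvPolynomial.rename_rename]
  congr 2
  ext k
  simp only [Function.comp_apply, Function.update_apply, Equiv.swap_apply_def, id]
  grind

theorem prime_X_sub_X [IsDomain K] {i j : ι} (h : i ≠ j) :
    Prime (MvPolynomial.X i - MvPolynomial.X j : MvPolynomial ι K) := by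
  classical
  rw [← Ideal.span_singleton_prime (sub_ne_zero.2 fun e => h (MvPolynomial.X_injective e))]
  have hker : Ideal.span {(MvPolynomial.X i - MvPolynomial.X j : MvPolynomial ι K)} =
      RingHom.ker (MvPolynomial.rename (R := K) (Function.update id j i)) := by
    ext p
    rw [Ideal.mem_span_singleton, X_sub_X_dvd_iff_rename_update_eq_zero, RingHom.mem_ker]
  exact hker ▸ RingHom.ker_isPrime _

theorem prod_X_sub_X_dvd_of_rename_swap_eq_neg {K : Type*} [Field K] [CharZero K] [LinearOrder ι]
    {s : Finset (ι × ι)} (hs : ∀ q ∈ s, q.1 < q.2) {p : MvPolynomial ι K}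
    (hp : ∀ i j, i ≠ j → MvPolynomial.rename (Equiv.swap i j) p = -p) :
    ∏ q ∈ s, (MvPolynomial.X q.1 - MvPolynomial.X q.2) ∣ p := by
  refine Finset.prod_dvd_of_isRelPrime (fun q hq r hr hne => ?_) fun q hq =>
    X_sub_X_dvd_of_rename_swap_eq_neg (hp _ _ (hs q hq).ne)
  have hq' := hs q hq
  have hr' := hs r hr
  refine (prime_X_sub_X hq'.ne).irreducible.isRelPrime_iff_not_dvd.2 fun hdvd => hne ?_
  rw [X_sub_X_dvd_iff_rename_update_eq_zero, map_sub, MvPolynomial.rename_X,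
    MvPolynomial.rename_X, sub_eq_zero, MvPolynomial.X_injective.eq_iff, Function.update_apply,
    Function.update_apply] at hdvd
  grind

theorem rename_truncTotal [Finite ι] (e : Equiv.Perm ι) (n : ℕ) (f : MvPowerSeries ι K) :
    MvPolynomial.rename e (f.truncTotal n) = (MvPowerSeries.rename e f).truncTotal n := by
  ext m
  obtain ⟨m, rfl⟩ : ∃ m', Finsupp.mapDomain e m' = m :=
    ⟨Finsupp.mapDomain e.symm m, by
      rw [← Finsupp.mapDomain_comp, Equiv.self_comp_symm, Finsupp.mapDomain_id]⟩
  have hcoeff := MvPowerSeries.coeff_embDomain_rename e.toEmbedding f m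
  rw [Finsupp.embDomain_eq_mapDomain] at hcoeff
  rw [MvPolynomial.coeff_rename_mapDomain _ e.injective, MvPowerSeries.coeff_truncTotal_eq_ite,
    MvPowerSeries.coeff_truncTotal_eq_ite, Finsupp.degree_mapDomain, ← hcoeff]
  rfl

/- Homogeneity of `p` makes the quotients of the truncations determine a power series: the
coefficient at `m` of a product with `p` only involves coefficients of degree `|m| - deg p`. -/
theorem coe_dvd_of_forall_dvd_truncTotal [Finite ι] {p : MvPolynomial ι K} {d : ℕ}
    (hp : p.IsHomogeneous d) {f : MvPowerSeries ι K} (h : ∀ n, p ∣ f.truncTotal n) :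
    (p : MvPowerSeries ι K) ∣ f := by
  classical
  choose g hg using h
  let G : MvPowerSeries ι K := fun m => (g (m.degree + d + 1)).coeff m
  refine ⟨G, MvPowerSeries.ext fun m => ?_⟩
  rw [← MvPowerSeries.coeff_truncTotal f m.degree.lt_succ_self, hg, MvPolynomial.coeff_mul,
    MvPowerSeries.coeff_mul]
  refine Finset.sum_congr rfl fun x hx => ?_
  rw [MvPolynomial.coeff_coe]
  by_cases hx₁ : p.coeff x.1 = 0
  · rw [hx₁, zero_mul, zero_mul]
  · have hdegree : m.degree = x.2.degree + d := by
      rw [← Finset.HasAntidiagonal.mem_antidiagonal.1 hx, map_add, add_comm, ← hp hx₁,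
        Finsupp.degree_eq_weight_one, Pi.one_def]
    rw [Nat.succ_eq_add_one, hdegree]
    rfl

theorem prod_X_sub_X_dvd_of_rename_swap_eq_neg_mvPowerSeries {K : Type*} [Field K]
    [CharZero K] [LinearOrder ι] [Finite ι] {s : Finset (ι × ι)} (hs : ∀ q ∈ s, q.1 < q.2)
    {f : MvPowerSeries ι K} (hf : ∀ i j, i ≠ j → MvPowerSeries.rename (Equiv.swap i j) f = -f) :
    ∏ q ∈ s, (MvPowerSeries.X q.1 - MvPowerSeries.X q.2) ∣ f := by
  have hhom : (∏ q ∈ s, (MvPolynomial.X q.1 - MvPolynomial.X q.2 :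
      MvPolynomial ι K)).IsHomogeneous (∑ _q ∈ s, 1) :=
    .prod _ _ _ fun q _ =>
      (MvPolynomial.isHomogeneous_X K q.1).sub (MvPolynomial.isHomogeneous_X K q.2)
  have hdvd := coe_dvd_of_forall_dvd_truncTotal hhom fun n =>
    prod_X_sub_X_dvd_of_rename_swap_eq_neg hs fun i j hij => by
      rw [rename_truncTotal, hf i j hij, map_neg]
  rw [← MvPolynomial.coeToMvPowerSeries.ringHom_apply, map_prod] at hdvd
  simpa only [map_sub, MvPolynomial.coeToMvPowerSeries.ringHom_apply, MvPolynomial.coe_X]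
    using hdvd

end Divisibility

section AlternatingFunctional

open Polynomial
open scoped PowerSeries

/-- The derivation `q · d/dq`. -/
def eulerDerivation (K : Type*) [CommRing K] : Derivation K K⟦X⟧ K⟦X⟧ :=
  (PowerSeries.X : K⟦X⟧) • PowerSeries.derivative K

theorem coeff_eulerDerivation {K : Type*} [CommRing K] (f : K⟦X⟧) (d : ℕ) :
    PowerSeries.coeff d (eulerDerivation K f) = d * PowerSeries.coeff d f := by
  cases d with
  | zero => simp [eulerDerivation]
  | succ d =>
    simp [eulerDerivation, PowerSeries.coeff_succ_X_mul, PowerSeries.coeff_derivative, mul_comm]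

section Determinant

variable {ι A : Type*} [Fintype ι] [DecidableEq ι] [CommRing A]

theorem sum_det_updateRow_eq_sum_det_updateCol (M B : Matrix ι ι A) :
    ∑ i, (M.updateRow i (B i)).det = ∑ j, (M.updateCol j fun i => B i j).det := by
  simp only [Matrix.det_apply]
  rw [Finset.sum_comm]
  conv_rhs => rw [Finset.sum_comm]
  refine Finset.sum_congr rfl fun σ _ => ?_
  rw [← Equiv.sum_comp σ]
  refine Finset.sum_congr rfl fun j _ => congrArg _ (Finset.prod_congr rfl fun k _ => ?_)
  by_cases h : k = j
  · subst h
    simp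
  · rw [Matrix.updateRow_ne (σ.injective.ne h), Matrix.updateCol_ne h]

omit [Fintype ι] in
theorem derivation_prod {k : Type*} [CommRing k] [Algebra k A] (D : Derivation k A A)
    (s : Finset ι) (f : ι → A) :
    D (∏ i ∈ s, f i) = ∑ j ∈ s, (∏ i ∈ s.erase j, f i) * D (f j) := by
  induction s using Finset.induction_on with
  | empty => simp
  | insert a s ha ih =>
    rw [Finset.prod_insert ha, D.leibniz, ih, Finset.sum_insert ha, Finset.erase_insert ha,
      smul_eq_mul, smul_eq_mul, Finset.mul_sum, add_comm]
    congr 1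
    refine Finset.sum_congr rfl fun j hj => ?_
    have hja : a ≠ j := by rintro rfl; exact ha hj
    rw [Finset.erase_insert_of_ne hja, Finset.prod_insert fun h => ha (Finset.mem_of_mem_erase h),
      mul_assoc]

theorem derivation_det {k : Type*} [CommRing k] [Algebra k A] (D : Derivation k A A)
    (M : Matrix ι ι A) : D M.det = ∑ j, (M.updateRow j fun i => D (M j i)).det := by
  refine .trans ?_ (sum_det_updateRow_eq_sum_det_updateCol M (M.map D)).symm
  simp only [Matrix.det_apply]
  rw [map_sum, Finset.sum_comm]
  refine Finset.sum_congr rfl fun σ _ => ?_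
  rw [← Finset.smul_sum, Units.smul_def, Units.smul_def, map_zsmul, derivation_prod]
  refine congrArg _ (Finset.sum_congr rfl fun j _ => ?_)
  rw [← Finset.prod_erase_mul _ _ (Finset.mem_univ j)]
  congr 1
  · refine Finset.prod_congr rfl fun i hi => ?_
    rw [Matrix.updateCol_ne (Finset.ne_of_mem_erase hi)]
  · simp

theorem dvd_det_sub_det {b : A} {M M' : Matrix ι ι A} (h : ∀ i j, b ∣ M i j - M' i j) :
    b ∣ M.det - M'.det := by
  rw [← Ideal.mem_span_singleton, ← Ideal.Quotient.eq, RingHom.map_det, RingHom.map_det]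
  congr 1
  ext i j
  exact Ideal.Quotient.eq.2 (Ideal.mem_span_singleton.2 (h i j))

end Determinant

variable {K : Type*} [CommRing K] {k : ℕ}

/-- The generating series `∑_d q^d [xⁱ] (p(x + d) f_d(x))`, for `i < k`, as a function of the
polynomial `p`. -/
def shiftSeries (k : ℕ) (f : ℕ → K⟦X⟧) : K[X] →ₗ[K] Fin k → K⟦X⟧ where
  toFun p i := PowerSeries.mk fun d =>
    PowerSeries.coeff i (aeval (PowerSeries.X + (d : K⟦X⟧)) p * f d)
  map_add' p q := by
    ext i d
    simp [add_mul]
  map_smul' c p := by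
    ext i d
    simp

theorem coeff_shiftSeries (f : ℕ → K⟦X⟧) (p : K[X]) (i : Fin k) (d : ℕ) :
    PowerSeries.coeff d (shiftSeries k f p i) =
      PowerSeries.coeff i (aeval (PowerSeries.X + (d : K⟦X⟧)) p * f d) := by
  simp [shiftSeries]

/-- The alternating functional
`(p₀, …, p_{k-1}) ↦ ∑_{d₀ + ⋯ + d_{k-1} = N} [x₀⁰ ⋯ x_{k-1}^{k-1}] det (p_j(xᵢ + dᵢ)) ∏ᵢ f_{dᵢ}(xᵢ)`
on tuples of polynomials, written as the `q^N`-coefficient of a single determinant. -/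
def altFunctional (k : ℕ) (f : ℕ → K⟦X⟧) (N : ℕ) : K[X] [⋀^Fin k]→ₗ[K] K where
  __ := (PowerSeries.coeff N).compMultilinearMap
    ((Matrix.detRowAlternating.toMultilinearMap.restrictScalars K).compLinearMap
      fun _ : Fin k => shiftSeries k f)
  map_eq_zero_of_eq' p i j h hij := by
    have hdet : (Matrix.of fun j => shiftSeries k f (p j)).det = 0 :=
      Matrix.det_zero_of_row_eq hij (congrArg (shiftSeries k f) h)
    exact (congrArg (PowerSeries.coeff N) hdet).trans (map_zero _)

theorem altFunctional_apply (f : ℕ → K⟦X⟧) (N : ℕ) (p : Fin k → K[X]) :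
    altFunctional k f N p =
      PowerSeries.coeff N (Matrix.of fun j => shiftSeries k f (p j)).det :=
  rfl

theorem altFunctional_update (f : ℕ → K⟦X⟧) (N : ℕ) (p : Fin k → K[X]) (j : Fin k) (r : K[X]) :
    altFunctional k f N (Function.update p j r) = PowerSeries.coeff N
      ((Matrix.of fun j => shiftSeries k f (p j)).updateRow j (shiftSeries k f r)).det := by
  rw [altFunctional_apply]
  congr 2
  ext1 i l
  by_cases h : i = j
  · subst h
    simp
  · rw [Matrix.updateRow_ne h]
    simp [h]

/- The Euler operator acts on the row of `p j` as multiplication of `p j` by `X`, up to a shift `S`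
of the columns whose total contribution to the derivative of the determinant vanishes. -/
theorem natCast_mul_altFunctional (f : ℕ → K⟦X⟧) (N : ℕ) (p : Fin k → K[X]) :
    N * altFunctional k f N p = ∑ j, altFunctional k f N (Function.update p j (X * p j)) := by
  set M : Matrix (Fin k) (Fin k) K⟦X⟧ := Matrix.of fun j => shiftSeries k f (p j) with hM
  let S : Matrix (Fin k) (Fin k) K⟦X⟧ := Matrix.of fun j i =>
    if h : 0 < (i : ℕ) then M j ⟨i - 1, by omega⟩ else 0
  have heuler (j : Fin k) : (fun i => eulerDerivation K (M j i)) =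
      shiftSeries k f (X * p j) + (-1 : K⟦X⟧) • S j := by
    ext i d
    have hmul (g : K⟦X⟧) : PowerSeries.coeff i ((d : K⟦X⟧) * g) = d * PowerSeries.coeff i g := by
      rw [← nsmul_eq_mul, map_nsmul, nsmul_eq_mul]
    by_cases h : 0 < (i : ℕ)
    · have hX := PowerSeries.coeff_succ_X_mul ((i : ℕ) - 1)
        (aeval (PowerSeries.X + (d : K⟦X⟧)) (p j) * f d)
      rw [Nat.sub_add_cancel h] at hX
      simp [S, M, h, coeff_eulerDerivation, coeff_shiftSeries, add_mul, mul_assoc, hmul, hX]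
    · have h0 : (i : ℕ) = 0 := by omega
      simp [S, M, h0, coeff_eulerDerivation, coeff_shiftSeries, add_mul, mul_assoc]
  have hS : ∑ j, (M.updateRow j (S j)).det = 0 := by
    rw [sum_det_updateRow_eq_sum_det_updateCol]
    refine Finset.sum_eq_zero fun i _ => ?_
    by_cases h : 0 < (i : ℕ)
    · let i' : Fin k := ⟨i - 1, by omega⟩
      have hne : i' ≠ i := Fin.ne_of_lt (Nat.sub_lt h one_pos)
      refine Matrix.det_zero_of_column_eq hne.symm fun j => ?_
      rw [Matrix.updateCol_self, Matrix.updateCol_ne hne]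
      simp [S, h, i']
    · refine Matrix.det_eq_zero_of_column_eq_zero i fun j => ?_
      simp [S, h]
  rw [altFunctional_apply, ← hM, ← coeff_eulerDerivation, derivation_det]
  simp only [heuler, Matrix.det_updateRow_add, Matrix.det_updateRow_smul,
    Finset.sum_add_distrib, ← Finset.mul_sum, hS, altFunctional_update, map_sum, mul_zero, add_zero]
  rfl

theorem shiftSeries_X_pow {f f' : ℕ → K⟦X⟧} {m : ℕ} (hkm : k ≤ m)
    (hshift : ∀ d, (PowerSeries.X + ((d + 1 : ℕ) : K⟦X⟧)) ^ m * f' (d + 1) = f d) (i : Fin k) :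
    shiftSeries k f' (X ^ m) i = PowerSeries.X * shiftSeries k f 1 i := by
  ext d
  cases d with
  | zero =>
    have him : ¬ m ≤ i := by omega
    simp [coeff_shiftSeries, PowerSeries.coeff_X_pow_mul', him]
  | succ d => simp [coeff_shiftSeries, PowerSeries.coeff_succ_X_mul, ← hshift d]

theorem altFunctional_succ_update {f f' : ℕ → K⟦X⟧} {w : K[X]} {m N : ℕ} (hkm : k ≤ m)
    (hmul : ∀ d ≤ N, f' d = aeval (PowerSeries.X + (d : K⟦X⟧)) w * f d)
    (hshift : ∀ d, (PowerSeries.X + ((d + 1 : ℕ) : K⟦X⟧)) ^ m * f' (d + 1) = f d)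
    (p : Fin k → K[X]) (j : Fin k) :
    altFunctional k f' (N + 1) (Function.update p j (X ^ m)) =
      altFunctional k f N (Function.update (fun j => w * p j) j 1) := by
  have hcongr : (PowerSeries.X : K⟦X⟧) ^ (N + 1) ∣
      ((Matrix.of fun l => shiftSeries k f' (p l)).updateRow j (shiftSeries k f 1)).det -
        ((Matrix.of fun l => shiftSeries k f (w * p l)).updateRow j (shiftSeries k f 1)).det := by
    refine dvd_det_sub_det fun l i => PowerSeries.X_pow_dvd_iff.2 fun d hd => ?_
    by_cases hl : l = j
    · simp [hl]
    · simp only [Matrix.updateRow_ne hl, Matrix.of_apply, map_sub, coeff_shiftSeries, map_mul,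
        hmul d (by omega), sub_eq_zero]
      ring_nf
  have hrow : shiftSeries k f' (X ^ m) = (PowerSeries.X : K⟦X⟧) • shiftSeries k f 1 :=
    funext fun i => shiftSeries_X_pow hkm hshift i
  have hcoeff := PowerSeries.X_pow_dvd_iff.1 hcongr N N.lt_succ_self
  rw [map_sub, sub_eq_zero] at hcoeff
  rw [altFunctional_update, altFunctional_update, hrow, Matrix.det_updateRow_smul,
    PowerSeries.coeff_succ_X_mul, hcoeff]

end AlternatingFunctional

section Alternant

open Polynomial
open scoped PowerSeries

variable {K : Type*} [CommRing K] {k : ℕ} (f : ℕ → K⟦X⟧) (N : ℕ)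

/-- The value of `altFunctional` at `(h, X h, …, X ^ (k - 1) h)`. -/
def alternant (k : ℕ) (h : K[X]) : K :=
  altFunctional k f N fun j => X ^ (j : ℕ) * h

theorem altFunctional_mul_of_monic {p : Fin k → K[X]} (hdeg : ∀ j, (p j).natDegree = j)
    (hmonic : ∀ j, (p j).Monic) (h : K[X]) :
    altFunctional k f N (fun j => p j * h) = alternant f N k h := by
  let P : Matrix (Fin k) (Fin k) K := Matrix.of fun i j => (p j).coeff i
  have hmul : (Matrix.of fun j => shiftSeries k f (p j * h)) =
      (PowerSeries.C.mapMatrix P).transpose *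
        Matrix.of fun i : Fin k => shiftSeries k f (X ^ (i : ℕ) * h) := by
    ext1 j l
    have hp : p j * h = ∑ i : Fin k, (p j).coeff i • (X ^ (i : ℕ) * h) := by
      conv_lhs => rw [(p j).as_sum_range' k (by rw [hdeg]; exact j.2), Finset.sum_mul]
      rw [← Fin.sum_univ_eq_sum_range fun i => monomial i ((p j).coeff i) * h]
      simp [← smul_X_eq_monomial]
    simp [P, hp, Matrix.mul_apply, PowerSeries.smul_eq_C_mul]
  rw [altFunctional_apply, hmul, Matrix.det_mul, Matrix.det_transpose, ← RingHom.map_det,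
    Matrix.det_matrixOfPolynomials p hdeg hmonic, map_one, one_mul]
  rfl

/-- The functional `r ↦ altFunctional (g, X g, …, X ^ (k - 1) g, r)`. -/
def lastSlot (k : ℕ) (g : K[X]) : K[X] →ₗ[K] K :=
  (altFunctional (k + 1) f N).toMultilinearMap.toLinearMap (fun j => X ^ (j : ℕ) * g) (Fin.last k)

theorem lastSlot_apply (g r : K[X]) :
    lastSlot f N k g r = altFunctional (k + 1) f N
      (Function.update (fun j : Fin (k + 1) => X ^ (j : ℕ) * g) (Fin.last k) r) :=
  rfl

theorem lastSlot_X_pow_mul_eq_zero (g : K[X]) {j : ℕ} (hj : j < k) :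
    lastSlot f N k g (X ^ j * g) = 0 := by
  have hne : Fin.last k ≠ ⟨j, by omega⟩ := Fin.ne_of_gt hj
  have h := (altFunctional (k + 1) f N).map_update_self (fun j : Fin (k + 1) => X ^ (j : ℕ) * g) hne
  rwa [← lastSlot_apply] at h

theorem lastSlot_X_pow_mul_self (g : K[X]) :
    lastSlot f N k g (X ^ k * g) = alternant f N (k + 1) g := by
  have h := Function.update_eq_self (Fin.last k) fun j : Fin (k + 1) => X ^ (j : ℕ) * g
  rw [Fin.val_last] at h
  rw [lastSlot_apply, h, alternant]

theorem lastSlot_X_pow_succ_mul (g : K[X]) :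
    lastSlot f N k g (X ^ (k + 1) * g) = N * alternant f N (k + 1) g := by
  rw [alternant, natCast_mul_altFunctional, Fin.sum_univ_castSucc, Finset.sum_eq_zero, zero_add,
    lastSlot_apply, Fin.val_last, ← mul_assoc, pow_succ']
  intro j _
  have h := (altFunctional (k + 1) f N).map_update_self (fun j => X ^ (j : ℕ) * g)
    (j.castSucc_lt_succ).ne
  simpa [pow_succ', mul_assoc] using h

theorem lastSlot_neg (g r : K[X]) : lastSlot f N k (-g) r = (-1) ^ k * lastSlot f N k g r := by
  have hupdate : Function.update (fun j : Fin (k + 1) => X ^ (j : ℕ) * -g) (Fin.last k) r = fun j =>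
      Function.update (fun _ => (-1 : K)) (Fin.last k) 1 j •
        Function.update (fun j : Fin (k + 1) => X ^ (j : ℕ) * g) (Fin.last k) r j := by
    ext1 j
    cases j using Fin.lastCases with
    | last => simp
    | cast j => simp
  rw [lastSlot_apply, hupdate, AlternatingMap.map_smul_univ, ← lastSlot_apply, smul_eq_mul,
    Fin.prod_univ_castSucc]
  simp

theorem lastSlot_X_add_C_mul (s : K) (h : K[X]) :
    lastSlot f N k ((X + C s) * h) h = (-1) ^ k * alternant f N (k + 1) h := by
  nontriviality K
  let p : Fin (k + 1) → K[X] := Fin.cons 1 fun j => X ^ (j : ℕ) * (X + C s)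
  have hmonic (j : Fin (k + 1)) : (p j).Monic := by
    cases j using Fin.cases with
    | zero => exact monic_one
    | succ j => exact (monic_X_pow _).mul (monic_X_add_C s)
  have hdeg (j : Fin (k + 1)) : (p j).natDegree = j := by
    cases j using Fin.cases with
    | zero => simp [p]
    | succ j => simp [p, (monic_X_pow _).natDegree_mul (monic_X_add_C s)]
  have hrotate : Function.update (fun j : Fin (k + 1) => X ^ (j : ℕ) * ((X + C s) * h))
      (Fin.last k) h = (fun j => p j * h) ∘ finRotate (k + 1) := by
    ext1 j
    cases j using Fin.lastCases with
    | last => simp [p]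
    | cast j => simp [p, mul_assoc]
  rw [lastSlot_apply, hrotate, AlternatingMap.map_perm, sign_finRotate,
    altFunctional_mul_of_monic f N hdeg hmonic]
  simp [Units.smul_def]

theorem lastSlot_succ_X_pow {f f' : ℕ → K⟦X⟧} {w : K[X]} {m N : ℕ} (hkm : k + 1 ≤ m)
    (hmul : ∀ d ≤ N, f' d = aeval (PowerSeries.X + (d : K⟦X⟧)) w * f d)
    (hshift : ∀ d, (PowerSeries.X + ((d + 1 : ℕ) : K⟦X⟧)) ^ m * f' (d + 1) = f d) (g : K[X]) :
    lastSlot f' (N + 1) k g (X ^ m) = lastSlot f N k (w * g) 1 := by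
  rw [lastSlot_apply, altFunctional_succ_update hkm hmul hshift, lastSlot_apply]
  simp only [mul_left_comm w]

end Alternant

section VandermondeCoefficient

open Polynomial
open scoped PowerSeries

variable {K : Type*} [CommRing K] {k : ℕ}

/-- The exponent of the monomial `∏ᵢ xᵢ ^ τ(i)`. -/
def exponent (τ : Fin k → Fin k) : Fin k →₀ ℕ :=
  Finsupp.equivFunOnFinite.symm fun i => (τ i : ℕ)

theorem exponent_apply (τ : Fin k → Fin k) (i : Fin k) : exponent τ i = τ i :=
  rfl

theorem exponent_le_exponent_iff {σ τ : Equiv.Perm (Fin k)} :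
    exponent τ ≤ exponent σ ↔ τ = σ := by
  refine ⟨fun h => ?_, fun h => h ▸ le_rfl⟩
  have hsum : ∑ i, (τ i : ℕ) = ∑ i, (σ i : ℕ) := by
    rw [Equiv.sum_comp τ fun i : Fin k => (i : ℕ), Equiv.sum_comp σ fun i : Fin k => (i : ℕ)]
  have heq := (Finset.sum_eq_sum_iff_of_le fun i _ => h i).1 hsum
  exact Equiv.ext fun i => Fin.ext (heq i (Finset.mem_univ i))

/-- The alternating sum of the coefficients of the monomials of the Vandermonde determinant. On
multiples of that determinant it reads off the constant coefficient of the quotient. It is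
irreducible to keep unification from enumerating the permutations. -/
@[irreducible]
def vandermondeCoeff (K : Type*) [CommRing K] (k : ℕ) : MvPowerSeries (Fin k) K →ₗ[K] K :=
  ∑ σ : Equiv.Perm (Fin k), ((Equiv.Perm.sign σ : ℤ) : K) • MvPowerSeries.coeff (exponent σ)

theorem vandermondeCoeff_apply (f : MvPowerSeries (Fin k) K) : vandermondeCoeff K k f =
    ∑ σ : Equiv.Perm (Fin k),
      ((Equiv.Perm.sign σ : ℤ) : K) * MvPowerSeries.coeff (exponent σ) f := by
  simp [vandermondeCoeff]

theorem vandermondeCoeff_eq_factorial_mul {f : MvPowerSeries (Fin k) K} {a : K}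
    (h : ∀ σ : Equiv.Perm (Fin k),
      MvPowerSeries.coeff (exponent σ) f = ((Equiv.Perm.sign σ : ℤ) : K) * a) :
    vandermondeCoeff K k f = k.factorial * a := by
  simp only [vandermondeCoeff_apply, h, ← mul_assoc, ← Int.cast_mul, Int.units_coe_mul_self]
  simp [Fintype.card_perm]

theorem det_vandermonde_X_eq_sum_monomial :
    (Matrix.vandermonde (MvPowerSeries.X : Fin k → MvPowerSeries (Fin k) K)).det =
      ∑ σ : Equiv.Perm (Fin k),
        MvPowerSeries.monomial (exponent σ) ((Equiv.Perm.sign σ : ℤ) : K) := by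
  rw [← Matrix.det_transpose, Matrix.det_apply']
  refine Finset.sum_congr rfl fun σ _ => ?_
  have hsingle : ∑ i, Finsupp.single i (σ i : ℕ) = exponent σ :=
    Finsupp.univ_sum_single (exponent σ)
  simp only [Matrix.transpose_apply, Matrix.vandermonde_apply, MvPowerSeries.X_pow_eq]
  rw [MvPowerSeries.prod_monomial, Finset.prod_const_one, hsingle,
    ← map_intCast (MvPowerSeries.C (σ := Fin k) (R := K)), ← MvPowerSeries.smul_eq_C_mul,
    ← map_smul, smul_eq_mul, mul_one]

theorem vandermondeCoeff_det_vandermonde_mul (g : MvPowerSeries (Fin k) K) :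
    vandermondeCoeff K k ((Matrix.vandermonde MvPowerSeries.X).det * g) =
      k.factorial * MvPowerSeries.constantCoeff g := by
  refine vandermondeCoeff_eq_factorial_mul fun σ => ?_
  rw [det_vandermonde_X_eq_sum_monomial, Finset.sum_mul, map_sum]
  simp only [MvPowerSeries.coeff_monomial_mul, exponent_le_exponent_iff]
  rw [Finset.sum_ite_eq' Finset.univ σ]
  simp

theorem coeff_exponent_sum_X_mul (σ : Equiv.Perm (Fin k)) (f : MvPowerSeries (Fin k) K) :
    MvPowerSeries.coeff (exponent σ) ((∑ i, MvPowerSeries.X i) * f) =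
      ∑ v : Fin k, if h : 0 < (v : ℕ) then
        MvPowerSeries.coeff (exponent (Function.update id v ⟨v - 1, by omega⟩ ∘ σ)) f else 0 := by
  rw [Finset.sum_mul, map_sum, ← Equiv.sum_comp σ.symm]
  refine Finset.sum_congr rfl fun v _ => ?_
  rw [MvPowerSeries.X, MvPowerSeries.coeff_monomial_mul, one_mul]
  simp only [Finsupp.single_le_iff, exponent_apply, Equiv.apply_symm_apply, Nat.succ_le_iff]
  split_ifs with h
  · refine congrArg (MvPowerSeries.coeff · f) (Finsupp.ext fun i => ?_)
    by_cases hi : σ i = v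
    · simp [exponent_apply, ← hi]
    · have hi' : σ.symm v ≠ i := fun h => hi (by simp [← h])
      simp [exponent_apply, hi, hi']
  · rfl

/- The exponents one below that of a Vandermonde monomial have a repeated entry, so that two
permutations of opposite sign contribute for each. -/
theorem vandermondeCoeff_sum_X_mul (f : MvPowerSeries (Fin k) K) :
    vandermondeCoeff K k ((∑ i, MvPowerSeries.X i) * f) = 0 := by
  simp only [vandermondeCoeff_apply, coeff_exponent_sum_X_mul, Finset.mul_sum]
  rw [Finset.sum_comm]
  refine Finset.sum_eq_zero fun v _ => ?_
  by_cases hv : 0 < (v : ℕ)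
  swap
  · simp [hv]
  simp only [hv, dif_pos]
  let w : Fin k := ⟨v - 1, by omega⟩
  have hne : v ≠ w := Fin.ne_of_gt (Fin.lt_def.2 (Nat.sub_lt hv one_pos))
  have hswap : Function.update id v w ∘ Equiv.swap v w = Function.update id v w := by
    ext i
    simp only [Function.comp_apply, Function.update_apply, Equiv.swap_apply_def, id]
    grind
  refine Finset.sum_involution (fun σ _ => Equiv.swap v w * σ) (fun σ _ => ?_) (fun σ _ _ => ?_)
    (fun σ _ => Finset.mem_univ _) fun σ _ => Equiv.swap_mul_self_mul v w σ
  · rw [Equiv.Perm.coe_mul, ← Function.comp_assoc, hswap, Equiv.Perm.sign_mul,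
      Equiv.Perm.sign_swap hne]
    simp [w]
  · simpa using hne

/-- The inclusion of the power series in the variable `xᵢ` into those in all variables. -/
def inVariable {ι : Type*} (i : ι) : K⟦X⟧ →ₐ[K] MvPowerSeries ι K :=
  MvPowerSeries.rename fun _ : Unit => i

section InVariable

variable {ι : Type*}

theorem inVariable_X (i : ι) : inVariable i (PowerSeries.X : K⟦X⟧) = MvPowerSeries.X i :=
  MvPowerSeries.rename_X _ _

theorem constantCoeff_inVariable (i : ι) (f : K⟦X⟧) :
    MvPowerSeries.constantCoeff (inVariable i f) = PowerSeries.constantCoeff f :=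
  MvPowerSeries.constantCoeff_rename _ _

theorem coeff_single_inVariable (i : ι) (f : K⟦X⟧) (m : ℕ) :
    MvPowerSeries.coeff (Finsupp.single i m) (inVariable i f) = PowerSeries.coeff m f := by
  have hcoeff := MvPowerSeries.coeff_embDomain_rename ⟨fun _ : Unit => i, fun _ _ _ => rfl⟩ f
    (Finsupp.single () m)
  rwa [Finsupp.embDomain_single] at hcoeff

theorem coeff_inVariable_eq_zero (i : ι) (f : K⟦X⟧) {e : ι →₀ ℕ}
    (he : ∀ m, e ≠ Finsupp.single i m) : MvPowerSeries.coeff e (inVariable i f) = 0 := by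
  refine MvPowerSeries.coeff_rename_eq_zero _ f ?_
  rintro ⟨x, rfl⟩
  refine he (x ()) ?_
  conv_lhs => rw [Finsupp.unique_single x]
  exact Finsupp.mapDomain_single

theorem coeff_prod_inVariable [Fintype ι] (f : ι → K⟦X⟧) (e : ι →₀ ℕ) :
    MvPowerSeries.coeff e (∏ i, inVariable i (f i)) = ∏ i, PowerSeries.coeff (e i) (f i) := by
  classical
  rw [MvPowerSeries.coeff_prod, Finset.sum_eq_single
    (Finsupp.equivFunOnFinite.symm fun i => Finsupp.single i (e i))]
  · exact Finset.prod_congr rfl fun i _ => coeff_single_inVariable i (f i) (e i)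
  · intro l hl hne
    by_contra hprod
    have hsingle (i : ι) : ∃ m, l i = Finsupp.single i m := by
      by_contra! hi
      exact hprod (Finset.prod_eq_zero (Finset.mem_univ i) (coeff_inVariable_eq_zero i (f i) hi))
    choose m hm using hsingle
    refine hne (Finsupp.ext fun i => ?_)
    rw [← (Finset.mem_finsuppAntidiag.1 hl).1]
    simp [hm, Finsupp.finsetSum_apply, Finsupp.single_apply]
  · intro hl
    exact absurd (Finset.mem_finsuppAntidiag.2 ⟨Finsupp.univ_sum_single e, Finset.subset_univ _⟩) hl

end InVariable

theorem coeff_prod_eq_sum_piAntidiag {ι : Type*} [Fintype ι] [DecidableEq ι] (N : ℕ)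
    (f : ι → K⟦X⟧) : PowerSeries.coeff N (∏ i, f i) =
      ∑ d ∈ Finset.univ.piAntidiag N, ∏ i, PowerSeries.coeff (d i) (f i) := by
  rw [PowerSeries.coeff_prod]
  exact Finset.sum_bij' (fun l _ => ⇑l) (fun d _ => Finsupp.equivFunOnFinite.symm d)
    (fun l hl => by simpa using hl) (fun d hd => by simpa using hd) (fun l _ => by ext; rfl)
    (fun d _ => rfl) fun l _ => rfl

/-- The Vandermonde determinant in the variables `xᵢ + dᵢ`, times the series `f_{dᵢ}(xᵢ)`. -/
def vandermondeTerm (f : ℕ → K⟦X⟧) (d : Fin k → ℕ) : MvPowerSeries (Fin k) K :=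
  (Matrix.vandermonde fun i => MvPowerSeries.X i + (d i : MvPowerSeries (Fin k) K)).det *
    ∏ i, inVariable i (f (d i))

theorem vandermondeTerm_eq_sum (f : ℕ → K⟦X⟧) (d : Fin k → ℕ) :
    vandermondeTerm f d = ∑ τ : Equiv.Perm (Fin k), ((Equiv.Perm.sign τ : ℤ) : K) •
      ∏ i, inVariable i ((PowerSeries.X + (d i : K⟦X⟧)) ^ (τ i : ℕ) * f (d i)) := by
  rw [vandermondeTerm, ← Matrix.det_transpose, Matrix.det_apply', Finset.sum_mul]
  refine Finset.sum_congr rfl fun τ _ => ?_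
  rw [mul_assoc, ← Finset.prod_mul_distrib, Int.cast_smul_eq_zsmul, zsmul_eq_mul]
  simp [inVariable_X]

theorem vandermondeCoeff_sum_vandermondeTerm (f : ℕ → K⟦X⟧) (N : ℕ) :
    vandermondeCoeff K k (∑ d ∈ Finset.univ.piAntidiag N, vandermondeTerm f d) =
      k.factorial * alternant f N k 1 := by
  refine vandermondeCoeff_eq_factorial_mul fun σ => ?_
  let A : Matrix (Fin k) (Fin k) K⟦X⟧ := Matrix.of fun j => shiftSeries k f (X ^ (j : ℕ) * 1)
  have hpermute : ((Equiv.Perm.sign σ : ℤ) : K) * alternant f N k 1 =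
      PowerSeries.coeff N (A.submatrix id σ).det := by
    rw [Matrix.det_permute', ← map_intCast (PowerSeries.C (R := K)), PowerSeries.coeff_C_mul]
    rfl
  rw [hpermute, Matrix.det_apply', map_sum, map_sum]
  simp only [vandermondeTerm_eq_sum, map_sum, map_smul, coeff_prod_inVariable, smul_eq_mul]
  rw [Finset.sum_comm]
  refine Finset.sum_congr rfl fun τ _ => ?_
  rw [← Finset.mul_sum, ← map_intCast (PowerSeries.C (R := K)), PowerSeries.coeff_C_mul,
    coeff_prod_eq_sum_piAntidiag]
  simp [A, coeff_shiftSeries, exponent_apply]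

end VandermondeCoefficient

section Recurrence

open Polynomial
open scoped PowerSeries

theorem alternant_zero_of_apply_zero_eq_one {K : Type*} [CommRing K] {f : ℕ → K⟦X⟧}
    (hf : f 0 = 1) (k : ℕ) (h : K[X]) : alternant f 0 k h = h.coeff 0 ^ k := by
  have hdet : alternant f 0 k h =
      (Matrix.of fun j i : Fin k => (X ^ (j : ℕ) * h).coeff i).det := by
    rw [alternant, altFunctional_apply, PowerSeries.coeff_zero_eq_constantCoeff_apply,
      RingHom.map_det]
    congr 1
    ext j i
    rw [RingHom.mapMatrix_apply, Matrix.map_apply, Matrix.of_apply,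
      ← PowerSeries.coeff_zero_eq_constantCoeff_apply, coeff_shiftSeries, hf, mul_one,
      Nat.cast_zero, add_zero, Matrix.of_apply, ← coeff_coe, ← eval₂_C_X_eq_coe]
    rfl
  rw [hdet, Matrix.det_of_isUpperTriangular]
  · simp [coeff_X_pow_mul']
  · intro j i hij
    rw [Matrix.of_apply, coeff_X_pow_mul', if_neg]
    simpa using hij

theorem exists_polynomial_eval_eq_map_add_smul {K V : Type*} [CommRing K] [AddCommGroup V]
    [Module K V] {k : ℕ} (φ : V [⋀^Fin k]→ₗ[K] K) (u v : Fin k → V) :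
    ∃ p : K[X], p.natDegree ≤ k ∧ p.coeff k = φ v ∧ ∀ t, p.eval t = φ (u + t • v) := by
  refine ⟨∑ s : Finset (Fin k), C (φ (s.piecewise v u)) * X ^ s.card, ?_, ?_, fun t => ?_⟩
  · exact natDegree_sum_le_of_forall_le _ _ fun s _ =>
      (natDegree_C_mul_X_pow_le _ _).trans (by simpa using s.card_le_univ)
  · rw [finsetSum_coeff, Finset.sum_eq_single Finset.univ]
    · simp
    · intro s _ hs
      have hcard : s.card < k := by simpa using s.card_lt_iff_ne_univ.2 hs
      rw [coeff_C_mul_X_pow, if_neg hcard.ne']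
    · simp
  · have hadd := φ.toMultilinearMap.map_add_univ (t • v) u
    rw [add_comm u, eval_finsetSum]
    refine .trans (Finset.sum_congr rfl fun s _ => ?_) hadd.symm
    have hsmul := φ.toMultilinearMap.map_piecewise_smul (fun _ => t) (s.piecewise v u) s
    have hpiecewise : s.piecewise (fun i => t • s.piecewise v u i) (s.piecewise v u) =
        s.piecewise (t • v) u := by
      ext1 i
      by_cases hi : i ∈ s <;> simp [hi]
    rw [hpiecewise, Finset.prod_const] at hsmul
    rw [hsmul, eval_mul, eval_C, eval_pow, eval_X, smul_eq_mul, mul_comm]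
    rfl

theorem eq_zero_of_eval_antisymmetric {K : Type*} [Field K] [Infinite K] {M : K} (hM : M ≠ 0)
    {e : K[X]} {m : ℕ} (hdeg : e.natDegree < m) (he : ∀ s,
      (s + M) * (2 * M - s) * (s ^ m * e.eval (M - s) - (M - s) ^ m * e.eval s) = 0) :
    e = 0 := by
  have hpoly : (X + C M) * (2 * C M - X) * (X ^ m * e.comp (C M - X) - (C M - X) ^ m * e) = 0 :=
    Polynomial.funext fun s => by simpa using he s
  have hM2 : (2 * C M - X : K[X]) ≠ 0 := fun h => by
    simpa [coeff_ofNat_mul] using congrArg (coeff · 1) h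
  have hdvd : (X : K[X]) ^ m ∣ (C M - X) ^ m * e :=
    ⟨e.comp (C M - X), (sub_eq_zero.1 ((mul_eq_zero.1 hpoly).resolve_left
      (mul_ne_zero (X_add_C_ne_zero M) hM2))).symm⟩
  have hcop : IsCoprime (X : K[X]) (C M - X) :=
    ⟨C M⁻¹, C M⁻¹, by rw [← mul_add, add_sub_cancel, ← C_mul, inv_mul_cancel₀ hM, C_1]⟩
  exact eq_zero_of_dvd_of_natDegree_lt (hcop.pow.dvd_of_dvd_mul_left hdvd) (by simpa using hdeg)

section

variable {K : Type*} [CommRing K] (f : ℕ → K⟦X⟧) (N : ℕ)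

theorem exists_polynomial_eval_eq_alternant (k : ℕ) (h : K[X]) : ∃ p : K[X],
    p.natDegree ≤ k ∧ p.coeff k = alternant f N k h ∧
      ∀ t, p.eval t = alternant f N k ((X + C t) * h) := by
  obtain ⟨p, hdeg, hlead, heval⟩ := exists_polynomial_eval_eq_map_add_smul
    (altFunctional k f N) (fun j => X ^ (j : ℕ) * (X * h)) (fun j => X ^ (j : ℕ) * h)
  refine ⟨p, hdeg, hlead, fun t => ?_⟩
  rw [heval, alternant]
  congr 1
  ext1 j
  simp only [Pi.add_apply, Pi.smul_apply, smul_eq_C_mul]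
  ring

theorem continuous_alternant [TopologicalSpace K] [IsTopologicalRing K] (k : ℕ) (h : K[X]) :
    Continuous fun t => alternant f N k ((X + C t) * h) := by
  obtain ⟨p, -, -, heval⟩ := exists_polynomial_eval_eq_alternant f N k h
  simp only [← heval]
  exact p.continuous

theorem sub_mul_lastSlot_X_pow_seven (s t : K) :
    (s - t) * lastSlot f N 4 ((X + C s) * (X + C t)) (X ^ 7) =
      (s - t) * (N - s - t) * alternant f N 5 ((X + C s) * (X + C t)) +
        s ^ 7 * alternant f N 5 (X + C t) - t ^ 7 * alternant f N 5 (X + C s) := by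
  generalize hg : (X + C s) * (X + C t) = g
  have hdivision : (s - t) • (X ^ 7 : K[X]) =
      (s - t) • (X ^ 5 * g) - ((s - t) * (s + t)) • (X ^ 4 * g) +
        (s ^ 3 - t ^ 3) • (X ^ 3 * g) - (s ^ 4 - t ^ 4) • (X ^ 2 * g) +
        (s ^ 5 - t ^ 5) • (X ^ 1 * g) - (s ^ 6 - t ^ 6) • (X ^ 0 * g) +
        s ^ 7 • (X + C t) - t ^ 7 • (X + C s) := by
    simp only [smul_eq_C_mul, map_sub, map_mul, map_add, map_pow, ← hg]
    ring
  have hlinear (s t : K) (h : g = (X + C s) * (X + C t)) :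
      lastSlot f N 4 g (X + C t) = alternant f N 5 (X + C t) := by
    rw [h, lastSlot_X_add_C_mul]
    norm_num
  have hzero {j : ℕ} (hj : j < 4) : lastSlot f N 4 g (X ^ j * g) = 0 :=
    lastSlot_X_pow_mul_eq_zero _ _ _ hj
  have hself := lastSlot_X_pow_mul_self (k := 4) f N g
  have hsucc := lastSlot_X_pow_succ_mul (k := 4) f N g
  simp only [Nat.reduceAdd] at hself hsucc
  rw [← smul_eq_mul, ← map_smul, hdivision]
  simp only [map_sub, map_add, map_smul, smul_eq_mul, hsucc, hself,
    hzero (show 0 < 4 by norm_num), hzero (show 1 < 4 by norm_num),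
    hzero (show 2 < 4 by norm_num), hzero (show 3 < 4 by norm_num),
    hlinear s t hg.symm, hlinear t s (hg.symm.trans (mul_comm _ _))]
  ring

theorem mul_lastSlot_one (s t u : K) :
    (s - t) * (s - u) * (t - u) *
        lastSlot f N 4 ((X + C s) * (X + C t) * (X + C u)) 1 =
      (s - t) * alternant f N 5 ((X + C s) * (X + C t)) +
        (t - u) * alternant f N 5 ((X + C t) * (X + C u)) +
        (u - s) * alternant f N 5 ((X + C u) * (X + C s)) := by
  generalize hc : (X + C s) * (X + C t) * (X + C u) = c
  have hlagrange : ((s - t) * (s - u) * (t - u)) • (1 : K[X]) =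
      (s - t) • ((X + C s) * (X + C t)) + (t - u) • ((X + C t) * (X + C u)) +
        (u - s) • ((X + C u) * (X + C s)) := by
    simp only [smul_eq_C_mul, map_sub, map_mul]
    ring
  have hquadratic (s t u : K) (h : c = (X + C u) * ((X + C s) * (X + C t))) :
      lastSlot f N 4 c ((X + C s) * (X + C t)) = alternant f N 5 ((X + C s) * (X + C t)) := by
    rw [h, lastSlot_X_add_C_mul]
    norm_num
  rw [← smul_eq_mul, ← map_smul, hlagrange, map_add, map_add, map_smul, map_smul, map_smul,
    hquadratic s t u (by rw [← hc, mul_comm]), hquadratic t u s (by rw [← hc, mul_assoc]),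
    hquadratic u s t (by rw [← hc]; ring)]
  simp only [smul_eq_mul]

theorem alternant_recurrence {f f' : ℕ → K⟦X⟧} {N : ℕ} {M : K}
    (hmul : ∀ d ≤ N, f' d = aeval (PowerSeries.X + (d : K⟦X⟧)) (C M - X) * f d)
    (hshift : ∀ d, (PowerSeries.X + ((d + 1 : ℕ) : K⟦X⟧)) ^ 7 * f' (d + 1) = f d) (s t : K) :
    (s + M) * (t + M) *
        ((s - t) * (N + 1 - s - t) * alternant f' (N + 1) 5 ((X + C s) * (X + C t)) +
          s ^ 7 * alternant f' (N + 1) 5 (X + C t) - t ^ 7 * alternant f' (N + 1) 5 (X + C s)) =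
      (s - t) * alternant f N 5 ((X + C s) * (X + C t)) +
        (t + M) * alternant f N 5 ((X + C t) * (X + C (-M))) -
          (s + M) * alternant f N 5 ((X + C s) * (X + C (-M))) := by
  have hlast : lastSlot f' (N + 1) 4 ((X + C s) * (X + C t)) (X ^ 7) =
      lastSlot f N 4 ((X + C s) * (X + C t) * (X + C (-M))) 1 := by
    have hneg : (C M - X) * ((X + C s) * (X + C t)) =
        -((X + C s) * (X + C t) * (X + C (-M))) := by
      rw [map_neg]
      ring
    rw [lastSlot_succ_X_pow (by norm_num) hmul hshift, hneg, lastSlot_neg]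
    norm_num
  have hdivision := sub_mul_lastSlot_X_pow_seven f' (N + 1) s t
  have hlagrange := mul_lastSlot_one f N s t (-M)
  rw [mul_comm (X + C (-M)) (X + C s)] at hlagrange
  rw [hlast] at hdivision
  push_cast at hdivision
  linear_combination hlagrange - (s + M) * (t + M) * hdivision

end

/-- The contribution of one Chern root `x` with degree `d` to `T_d / (N! (2N)!)`, modulo
`x₁ + ⋯ + x₅`: the `i`-th weight of `Λ⁴S*` is then `-xᵢ`. -/
def rootFactor (N d : ℕ) : ℚ⟦X⟧ :=
  (∏ m ∈ Finset.Icc 1 (N - d), ((m : ℚ⟦X⟧) - PowerSeries.X)) *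
    (∏ m ∈ Finset.Icc 1 d, (PowerSeries.X + (m : ℚ⟦X⟧)) ^ 7)⁻¹

theorem rootFactor_zero : rootFactor 0 0 = 1 := by
  simp [rootFactor]

theorem rootFactor_succ_left {N d : ℕ} (hd : d ≤ N) : rootFactor (N + 1) d =
    aeval (PowerSeries.X + (d : ℚ⟦X⟧)) (C (N + 1 : ℚ) - X) * rootFactor N d := by
  rw [rootFactor, rootFactor, Nat.sub_add_comm hd, Finset.prod_Icc_succ_top (by omega)]
  simp [Nat.cast_sub hd]
  ring

theorem rootFactor_succ_succ (N d : ℕ) :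
    (PowerSeries.X + ((d + 1 : ℕ) : ℚ⟦X⟧)) ^ 7 * rootFactor (N + 1) (d + 1) = rootFactor N d := by
  have hunit : PowerSeries.constantCoeff ((PowerSeries.X + ((d + 1 : ℕ) : ℚ⟦X⟧)) ^ 7) ≠ 0 := by
    rw [map_pow, map_add, PowerSeries.constantCoeff_X, zero_add, map_natCast]
    positivity
  rw [rootFactor, rootFactor, Nat.add_sub_add_right, Finset.prod_Icc_succ_top (by omega),
    PowerSeries.mul_inv_rev, mul_left_comm, ← mul_assoc _ _⁻¹, PowerSeries.mul_inv_cancel _ hunit,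
    one_mul]

theorem eq_of_forall_notMem_finite {Y Z : Type*} [TopologicalSpace Y] [T1Space Y]
    [∀ y : Y, (nhdsWithin y {y}ᶜ).NeBot] [TopologicalSpace Z] [T2Space Z] {g : Y → Z}
    (hg : Continuous g) {S : Set Y} (hS : S.Finite) {z : Z} (h : ∀ y ∉ S, g y = z) (y : Y) :
    g y = z :=
  congrFun (hg.ext_on (dense_univ.sdiff_finite hS) continuous_const fun y hy => h y hy.2) y

theorem eq_zero_of_alternant_recurrence {M : ℚ} (hM : M ≠ 0) {δ : ℚ → ℚ → ℚ}
    (hsymm : ∀ s t, δ s t = δ t s) (hcont : ∀ t, Continuous fun s => δ s t) {e : ℚ[X]} {m : ℕ}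
    (hdeg : e.natDegree < m) (h : ∀ s t, (s + M) * (t + M) *
      ((s - t) * (M - s - t) * δ s t + s ^ m * e.eval t - t ^ m * e.eval s) = 0) :
    e = 0 ∧ ∀ s t, δ s t = 0 := by
  have he : e = 0 := eq_zero_of_eval_antisymmetric hM hdeg fun s => by
    linear_combination h s (M - s)
  have hoff {t : ℚ} (ht : t ≠ -M) (s : ℚ) : δ s t = 0 := by
    refine eq_of_forall_notMem_finite (hcont t) (S := {-M, t, M - t}) (by simp)
      (fun s hs => ?_) s
    simp only [Set.mem_insert_iff, Set.mem_singleton_iff, not_or] at hs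
    obtain ⟨h₁, h₂, h₃⟩ := hs
    have hst := h s t
    simp only [he, eval_zero, mul_zero, add_zero, sub_zero, ← mul_assoc] at hst
    refine (mul_eq_zero.1 hst).resolve_left (mul_ne_zero (mul_ne_zero (mul_ne_zero ?_ ?_) ?_) ?_)
    · exact fun h => h₁ (by linear_combination h)
    · exact fun h => ht (by linear_combination h)
    · exact sub_ne_zero.2 h₂
    · exact fun h => h₃ (by linear_combination -h)
  refine ⟨he, fun s t => ?_⟩
  by_cases ht : t = -M
  · exact eq_of_forall_notMem_finite (hcont t) (S := {-M}) (by simp)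
      (fun s hs => (hsymm s t).trans (hoff hs t)) s
  · exact hoff ht s

/-- The three-term relation between consecutive values `A`, `B`, `B'` of `a_r / (r! (2r)!)`. -/
def IsThreeTerm (r A B B' : ℚ) : Prop :=
  r ^ 6 * A = (18 * r ^ 3 - 27 * r ^ 2 + 15 * r - 3) * B + 27 * B'

/-- The closed form of the alternant with one linear factor `X + C t`, in terms of the values
`A`, `B` of the undeformed alternant at levels `r`, `r - 1`. -/
def linearForm (r A B t : ℚ) : ℚ :=
  A * (t ^ 5 + r * t ^ 4 + 2 / 3 * r ^ 2 * t ^ 3 + r ^ 3 / 3 * t ^ 2 + r ^ 4 / 9 * t) +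
    B * (t ^ 2 + (r - 1 / 3) * t + (4 * r ^ 2 - 2 * r + 1) / 3)

/-- The closed form of the alternant with two linear factors `X + C s` and `X + C t`, where
`p = s + t` and `q = s * t`, in terms of the values `A`, `B`, `B'` of the undeformed alternant at
levels `r`, `r - 1`, `r - 2`. It was found by solving `alternant_recurrence` at small levels. -/
def quadraticForm (r A B B' p q : ℚ) : ℚ :=
  A * (q ^ 5 + r * p * q ^ 4 + r ^ 2 / 3 * (2 * p ^ 2 - q) * q ^ 3 +
      (p ^ 2 - q) * p * q * (r ^ 3 / 3 * q + r ^ 4 / 9 * p + r ^ 5 / 9)) +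
    B * ((4 * r ^ 2 - 2 * r + 1) / 3 *
        (p ^ 5 + r * p ^ 4 + (r - 1) * (2 * r + 1) / 3 * p ^ 3 +
          (r - 1) ^ 2 * (r + 1) / 3 * (p ^ 2 - q) + (r - 1) ^ 3 * (r + 2) / 9 * p + r * q ^ 2) +
      p * q * (-(r - 1) * (2 * r + 1) * (7 * r ^ 2 - 2 * r + 1) / 9 +
        (13 * r ^ 2 - 7 * r + 4) / 3 * q - 3 * q ^ 2 - r * (10 * r ^ 2 - 2 * r + 1) / 3 * p +
        (4 / 3 - 3 * r) * p * q - (17 * r ^ 2 - 9 * r + 5) / 3 * p ^ 2 + p ^ 2 * q +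
        (r - 1 / 3) * p ^ 3) +
      (20 / 81 * r ^ 6 - 34 / 27 * r ^ 5 + 73 / 27 * r ^ 4 - 256 / 81 * r ^ 3 +
        58 / 27 * r ^ 2 - 22 / 27 * r + 11 / 81)) +
    B' * (16 / 9 * r ^ 4 - 20 / 3 * r ^ 3 + 14 * r ^ 2 - 439 / 27 * r + 23 / 3 +
      (4 * r ^ 2 - 2 * r + 3) / 3 * (p ^ 2 - q) +
      (4 / 3 * r ^ 3 - 2 * r ^ 2 + 25 / 9 * r - 2) * p + (2 * r - 13 / 3) * p * q +
      2 * p ^ 2 * q + 4 / 3 * p ^ 3)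

theorem quadraticForm_recurrence {r A A' B B' : ℚ} (h : IsThreeTerm r A B B')
    (h' : IsThreeTerm (r + 1) A' A B) (s t : ℚ) :
    (s + (r + 1)) * (t + (r + 1)) *
        ((s - t) * (r + 1 - s - t) * quadraticForm (r + 1) A' A B (s + t) (s * t) +
          s ^ 7 * linearForm (r + 1) A' A t - t ^ 7 * linearForm (r + 1) A' A s) =
      (s - t) * quadraticForm r A B B' (s + t) (s * t) +
        (t + (r + 1)) * quadraticForm r A B B' (t + -(r + 1)) (t * -(r + 1)) -
          (s + (r + 1)) * quadraticForm r A B B' (s + -(r + 1)) (s * -(r + 1)) := by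
  unfold IsThreeTerm at h h'
  unfold quadraticForm linearForm
  linear_combination (s - t) * (s + (r + 1)) * (t + (r + 1)) *
    (s * t * (s + t) * ((s + t) ^ 2 - s * t) / 9 * h' +
      (6 * (s + t) - 11) * (s + t - (r + 1)) / 81 * h)

/-- The values `alternant (rootFactor N) N 5` takes on products of two linear factors are given by
`quadraticForm`, with `B` and `B'` being the values of the undeformed alternant at levels `N - 1`
and `N - 2`. -/
structure IsClosedForm (N : ℕ) (B B' : ℚ) : Prop where
  threeTerm : IsThreeTerm N (alternant (rootFactor N) N 5 1) B B'
  quadratic : ∀ s t, alternant (rootFactor N) N 5 ((X + C s) * (X + C t)) =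
    quadraticForm N (alternant (rootFactor N) N 5 1) B B' (s + t) (s * t)

theorem isClosedForm_zero : IsClosedForm 0 0 0 := by
  have hzero (h : ℚ[X]) : alternant (rootFactor 0) 0 5 h = h.coeff 0 ^ 5 :=
    alternant_zero_of_apply_zero_eq_one rootFactor_zero 5 h
  refine ⟨by simp [IsThreeTerm], fun s t => ?_⟩
  rw [hzero, hzero, mul_coeff_zero]
  simp [quadraticForm]

theorem continuous_quadraticForm (r A B B' t : ℚ) :
    Continuous fun s => quadraticForm r A B B' (s + t) (s * t) := by
  unfold quadraticForm
  fun_prop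

theorem exists_polynomial_eval_eq_linearForm (r A B : ℚ) : ∃ p : ℚ[X],
    p.natDegree ≤ 5 ∧ p.coeff 5 = A ∧ ∀ t, p.eval t = linearForm r A B t := by
  refine ⟨C A * (X ^ 5 + C r * X ^ 4 + C (2 / 3 * r ^ 2) * X ^ 3 + C (r ^ 3 / 3) * X ^ 2 +
    C (r ^ 4 / 9) * X) + C B * (X ^ 2 + C (r - 1 / 3) * X + C ((4 * r ^ 2 - 2 * r + 1) / 3)),
    by compute_degree!, ?_, fun t => by simp [linearForm]⟩
  simp only [coeff_add, coeff_C_mul, coeff_X_pow, coeff_X, coeff_C]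
  norm_num

theorem IsClosedForm.succ {N : ℕ} {B B' : ℚ} (h : IsClosedForm N B B') :
    IsClosedForm (N + 1) (alternant (rootFactor N) N 5 1) B := by
  set A := alternant (rootFactor N) N 5 1
  have hM : (N + 1 : ℚ) ≠ 0 := by positivity
  obtain ⟨A', hthree⟩ : ∃ A', IsThreeTerm (N + 1) A' A B :=
    ⟨_, mul_div_cancel₀ _ (pow_ne_zero 6 hM)⟩
  obtain ⟨p, hpdeg, hplead, hpeval⟩ :=
    exists_polynomial_eval_eq_alternant (rootFactor (N + 1)) (N + 1) 5 1
  obtain ⟨p', hpdeg', hplead', hpeval'⟩ := exists_polynomial_eval_eq_linearForm (N + 1) A' A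
  obtain ⟨hlinear, hquadratic⟩ := eq_zero_of_alternant_recurrence hM (m := 7) (e := p - p')
    (δ := fun s t => alternant (rootFactor (N + 1)) (N + 1) 5 ((X + C s) * (X + C t)) -
      quadraticForm (N + 1) A' A B (s + t) (s * t))
    (fun s t => by rw [mul_comm, add_comm s, mul_comm s])
    (fun t => (continuous_alternant _ _ _ _).sub (continuous_quadraticForm _ _ _ _ t))
    ((natDegree_sub_le_of_le hpdeg hpdeg').trans_lt (by norm_num))
    (fun s t => by
      have hrec := alternant_recurrence (M := (N + 1 : ℚ)) (fun d hd => rootFactor_succ_left hd)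
        (rootFactor_succ_succ N) s t
      rw [h.quadratic, h.quadratic, h.quadratic] at hrec
      simp only [eval_sub, hpeval, hpeval', mul_one]
      linear_combination hrec - quadraticForm_recurrence h.threeTerm hthree s t)
  have hlead : alternant (rootFactor (N + 1)) (N + 1) 5 1 = A' := by
    rw [← hplead, ← hplead', sub_eq_zero.1 hlinear]
  refine ⟨?_, fun s t => ?_⟩
  · rwa [hlead, Nat.cast_succ]
  · rw [hlead, Nat.cast_succ]
    exact sub_eq_zero.1 (hquadratic s t)

theorem isThreeTerm_alternant (N : ℕ) :
    IsThreeTerm (N + 2) (alternant (rootFactor (N + 2)) (N + 2) 5 1)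
      (alternant (rootFactor (N + 1)) (N + 1) 5 1) (alternant (rootFactor N) N 5 1) := by
  have hclosed : ∃ B B', IsClosedForm N B B' := by
    induction N with
    | zero => exact ⟨0, 0, isClosedForm_zero⟩
    | succ N ih =>
      obtain ⟨B, B', h⟩ := ih
      exact ⟨_, _, h.succ⟩
  obtain ⟨B, B', h⟩ := hclosed
  have hthree := h.succ.succ.threeTerm
  rwa [show ((N + 1 + 1 : ℕ) : ℚ) = N + 2 by push_cast; ring] at hthree

end Recurrence

section Quotient

open Polynomial
open scoped PowerSeries

theorem Cc_natCast (m : ℕ) : Cc (m : ℚ) = m :=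
  map_natCast MvPowerSeries.C m

theorem prod_pairs_sub {S : Type*} [CommRing S] (y : Fin 5 → S) :
    ∏ p ∈ pairs, (y p.1 - y p.2) = (Matrix.vandermonde y).det := by
  have hcard : pairs.card = 10 := by decide
  rw [Matrix.det_vandermonde, ← Finset.prod_finset_product' pairs _ _ (by simp [pairs])]
  simp only [← neg_sub (y (Prod.snd _)), Finset.prod_neg, hcard]
  norm_num

theorem Vand_eq_det_vandermonde : Vand = (Matrix.vandermonde MvPowerSeries.X).det :=
  prod_pairs_sub _

/-- The factor `∏_{m=1}^{⟨w,d⟩} (⟨w,x⟩ + m)` of `T d` belonging to the weight vector `w`. -/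
def weightFactor (w d : Fin 5 → ℕ) : R :=
  ∏ m ∈ Finset.Icc 1 (∑ j, w j * d j),
    ((∑ j, (w j : R) * MvPowerSeries.X j) + (m : R))

theorem prod_map_ws {S : Type*} [CommMonoid S] (g : (Fin 5 → ℕ) → S) :
    (ws.map g).prod =
      (∏ s, g (Function.update 1 s 0)) * g (fun _ => 1) * g fun _ => 2 := by
  have hws : ws =
      List.ofFn (fun s => Function.update (1 : Fin 5 → ℕ) s 0) ++ [fun _ => 1, fun _ => 2] := by
    decide
  rw [hws, List.map_append, List.prod_append, List.map_ofFn, List.prod_ofFn]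
  simp [mul_assoc]

theorem inv_prod_inVariable {ι K : Type*} [Fintype ι] [Field K] {f : ι → K⟦X⟧}
    (hf : ∀ i, PowerSeries.constantCoeff (f i) ≠ 0) :
    (∏ i, inVariable i (f i))⁻¹ = ∏ i, inVariable i (f i)⁻¹ := by
  rw [MvPowerSeries.inv_eq_iff_mul_eq_one, ← Finset.prod_mul_distrib]
  · refine Finset.prod_eq_one fun i _ => ?_
    rw [← map_mul, PowerSeries.inv_mul_cancel _ (hf i), map_one]
  · rw [map_prod]
    exact Finset.prod_ne_zero_iff.2 fun i _ => (constantCoeff_inVariable i (f i)).trans_ne (hf i)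

theorem T_eq (d : Fin 5 → ℕ) :
    T d = (Matrix.vandermonde fun i => MvPowerSeries.X i + (d i : R)).det *
      ((∏ s, weightFactor (Function.update 1 s 0) d) * weightFactor (fun _ => 1) d *
        weightFactor (fun _ => 2) d) *
      ∏ j, inVariable j (∏ m ∈ Finset.Icc 1 (d j), (PowerSeries.X + (m : ℚ⟦X⟧)) ^ 7)⁻¹ := by
  rw [← prod_pairs_sub, ← prod_map_ws fun w => weightFactor w d, ← inv_prod_inVariable, T]
  · have hsub (a b : ℕ) : Cc ((a : ℚ) - b) = a - b := by
      rw [Cc, map_sub]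
      exact congrArg₂ (· - ·) (Cc_natCast a) (Cc_natCast b)
    simp only [hsub, Cc_natCast, weightFactor, n, map_prod, map_pow, map_add, map_natCast,
      inVariable_X, add_sub_add_comm]
  · intro j
    rw [map_prod]
    refine Finset.prod_ne_zero_iff.2 fun m hm => ?_
    have hm' := (Finset.mem_Icc.1 hm).1
    simp only [map_pow, map_add, PowerSeries.constantCoeff_X, map_natCast, zero_add]
    positivity

theorem rename_det_vandermonde (σ : Equiv.Perm (Fin 5)) (d : Fin 5 → ℕ) :
    MvPowerSeries.rename σ
        (Matrix.vandermonde fun i => MvPowerSeries.X i + (d (σ i) : R)).det =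
      ((Equiv.Perm.sign σ : ℤ) : R) *
        (Matrix.vandermonde fun i => MvPowerSeries.X i + (d i : R)).det := by
  rw [← Matrix.det_permute, AlgHom.map_det]
  congr 1
  ext1 i j
  simp [Matrix.vandermonde_apply]

theorem rename_weightFactor (σ : Equiv.Perm (Fin 5)) (w d : Fin 5 → ℕ) :
    MvPowerSeries.rename σ (weightFactor w (d ∘ σ)) = weightFactor (w ∘ σ.symm) d := by
  rw [weightFactor, weightFactor, ← Equiv.sum_comp σ fun j => (w ∘ σ.symm) j * d j,
    ← Equiv.sum_comp σ fun j => (((w ∘ σ.symm) j : ℕ) : R) * MvPowerSeries.X j]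
  simp

theorem rename_inVariable {ι τ K : Type*} [CommRing K] (σ : ι → τ)
    [Filter.TendstoCofinite σ] (i : ι) (f : K⟦X⟧) :
    MvPowerSeries.rename σ (inVariable i f) = inVariable (σ i) f :=
  MvPowerSeries.rename_rename _ _ _

theorem rename_T (σ : Equiv.Perm (Fin 5)) (d : Fin 5 → ℕ) :
    MvPowerSeries.rename σ (T (d ∘ σ)) = ((Equiv.Perm.sign σ : ℤ) : R) * T d := by
  have hupdate (s : Fin 5) :
      Function.update (1 : Fin 5 → ℕ) s 0 ∘ σ.symm = Function.update (1 : Fin 5 → ℕ) (σ s) 0 := by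
    rw [Function.update_comp_equiv]
    rfl
  rw [T_eq, T_eq]
  simp only [map_mul, map_prod, rename_weightFactor, rename_inVariable, hupdate,
    Function.comp_apply, rename_det_vandermonde]
  rw [Equiv.prod_comp σ fun s => weightFactor (Function.update 1 s 0) d,
    Equiv.prod_comp σ fun j => inVariable j
      (∏ m ∈ Finset.Icc 1 (d j), (PowerSeries.X + (m : ℚ⟦X⟧)) ^ 7)⁻¹]
  simp only [mul_assoc]
  rfl

theorem F_eq_sum_piAntidiag (N : ℕ) : F N = ∑ d ∈ Finset.univ.piAntidiag N, T d := by
  refine Finset.sum_congr (Finset.ext fun d => ?_) fun _ _ => rfl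
  have hle (h : ∑ j, d j = N) (j : Fin 5) : d j < N + 1 :=
    Nat.lt_succ_of_le (h ▸ Finset.single_le_sum (fun _ _ => Nat.zero_le _) (Finset.mem_univ j))
  simpa using hle

theorem rename_F (σ : Equiv.Perm (Fin 5)) (N : ℕ) :
    MvPowerSeries.rename σ (F N) = ((Equiv.Perm.sign σ : ℤ) : R) * F N := by
  rw [F_eq_sum_piAntidiag, map_sum, Finset.mul_sum]
  refine Finset.sum_equiv (Equiv.arrowCongr σ (Equiv.refl ℕ)) (fun d => ?_) fun d _ => ?_
  · simp only [Finset.mem_piAntidiag, Finset.mem_univ, implies_true, and_true]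
    rw [← Equiv.sum_comp σ.symm d]
    rfl
  · rw [← rename_T]
    congr 2
    ext j
    simp

theorem Vand_dvd_F (N : ℕ) : Vand ∣ F N :=
  prod_X_sub_X_dvd_of_rename_swap_eq_neg_mvPowerSeries (by simp [pairs]) fun i j hij => by
    rw [rename_F, Equiv.Perm.sign_swap hij]
    simp

/-- Reduction of power series modulo `x₁ + ⋯ + x₅`. -/
def modSum : R →+* R ⧸ Ideal.span {(∑ i, MvPowerSeries.X i : R)} :=
  Ideal.Quotient.mk _

theorem vandermondeCoeff_eq_of_modSum_eq {f g : R} (h : modSum f = modSum g) :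
    vandermondeCoeff ℚ 5 f = vandermondeCoeff ℚ 5 g := by
  obtain ⟨e, he⟩ := Ideal.mem_span_singleton.1 (Ideal.Quotient.eq.1 h)
  rw [← sub_eq_zero, ← map_sub, he, vandermondeCoeff_sum_X_mul]

theorem modSum_sum_X : modSum (∑ i, MvPowerSeries.X i) = 0 :=
  Ideal.Quotient.eq_zero_iff_mem.2 (Ideal.mem_span_singleton_self _)

theorem modSum_weightFactor_const {d : Fin 5 → ℕ} {N : ℕ} (hd : ∑ j, d j = N) (c : ℕ) :
    modSum (weightFactor (fun _ => c) d) = (c * N).factorial := by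
  rw [weightFactor, ← Finset.mul_sum, ← Finset.mul_sum, hd, ← Finset.prod_Ico_id_eq_factorial]
  simp only [map_prod, map_add, map_mul, modSum_sum_X, mul_zero, zero_add, map_natCast,
    Nat.cast_prod, Finset.Ico_add_one_right_eq_Icc]

theorem add_sum_update_mul {ι S : Type*} [Fintype ι] [DecidableEq ι] [CommSemiring S] (s : ι)
    (y : ι → S) : y s + ∑ j, (Function.update (1 : ι → ℕ) s 0 j : S) * y j = ∑ j, y j := by
  rw [← Finset.add_sum_erase _ _ (Finset.mem_univ s),
    ← Finset.add_sum_erase _ y (Finset.mem_univ s)]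
  have hrest : ∀ j ∈ Finset.univ.erase s, (Function.update (1 : ι → ℕ) s 0 j : S) * y j = y j :=
    fun j hj => by simp [Finset.ne_of_mem_erase hj]
  rw [Finset.sum_congr rfl hrest]
  simp

theorem modSum_weightFactor_update {d : Fin 5 → ℕ} {N : ℕ} (hd : ∑ j, d j = N) (s : Fin 5) :
    modSum (weightFactor (Function.update 1 s 0) d) =
      modSum (inVariable s (∏ m ∈ Finset.Icc 1 (N - d s), ((m : ℚ⟦X⟧) - PowerSeries.X))) := by
  have hdegree : ∑ j, Function.update (1 : Fin 5 → ℕ) s 0 j * d j = N - d s := by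
    rw [← hd, ← add_sum_update_mul s d, Nat.add_sub_cancel_left]
    rfl
  have hroot : modSum (∑ j, (Function.update (1 : Fin 5 → ℕ) s 0 j : R) * MvPowerSeries.X j) =
      -modSum (MvPowerSeries.X s) := by
    rw [eq_neg_iff_add_eq_zero, add_comm, ← map_add, add_sum_update_mul, modSum_sum_X]
  rw [weightFactor, hdegree, map_prod, map_prod, map_prod]
  refine Finset.prod_congr rfl fun m _ => ?_
  rw [map_add, hroot, map_sub, inVariable_X, map_sub, sub_eq_neg_add, map_natCast, map_natCast,
    map_natCast]

theorem modSum_T {d : Fin 5 → ℕ} {N : ℕ} (hd : ∑ j, d j = N) :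
    modSum (T d) =
      modSum ((N.factorial * (2 * N).factorial) • vandermondeTerm (rootFactor N) d) := by
  have hfactor : ∏ i, inVariable i (rootFactor N (d i)) =
      (∏ s, inVariable s (∏ m ∈ Finset.Icc 1 (N - d s), ((m : ℚ⟦X⟧) - PowerSeries.X))) *
        ∏ j, inVariable j (∏ m ∈ Finset.Icc 1 (d j), (PowerSeries.X + (m : ℚ⟦X⟧)) ^ 7)⁻¹ := by
    simp only [rootFactor, map_mul, Finset.prod_mul_distrib]
  rw [T_eq, vandermondeTerm, hfactor, nsmul_eq_mul]
  simp only [map_mul, map_prod modSum, modSum_weightFactor_update hd, modSum_weightFactor_const hd,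
    map_natCast, Nat.cast_mul, one_mul]
  ring

theorem vandermondeCoeff_F (N : ℕ) : vandermondeCoeff ℚ 5 (F N) =
    (N.factorial * (2 * N).factorial) •
      ((Nat.factorial 5 : ℚ) * alternant (rootFactor N) N 5 1) := by
  rw [← vandermondeCoeff_sum_vandermondeTerm, ← map_nsmul, Finset.smul_sum]
  refine vandermondeCoeff_eq_of_modSum_eq ?_
  rw [F_eq_sum_piAntidiag, map_sum, map_sum]
  exact Finset.sum_congr rfl fun d hd => modSum_T (Finset.mem_piAntidiag.1 hd).1

theorem constantCoeff_of_F_eq {N : ℕ} {g : R} (h : F N = Vand * g) :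
    MvPowerSeries.constantCoeff g =
      N.factorial * (2 * N).factorial * alternant (rootFactor N) N 5 1 := by
  have hfactorial (k : ℕ) : (k.factorial : ℚ) ≠ 0 := Nat.cast_ne_zero.2 k.factorial_ne_zero
  have hleft : vandermondeCoeff ℚ 5 (F N) =
      (Nat.factorial 5 : ℚ) * MvPowerSeries.constantCoeff g := by
    rw [h, Vand_eq_det_vandermonde]
    exact vandermondeCoeff_det_vandermonde_mul g
  refine mul_left_cancel₀ (hfactorial 5) ?_
  rw [← hleft, vandermondeCoeff_F, nsmul_eq_mul, mul_left_comm, Nat.cast_mul]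

end Quotient

section PicardFuchs

theorem coeff_th (f : PowerSeries ℚ) (d : ℕ) :
    PowerSeries.coeff d (th f) = d * PowerSeries.coeff d f :=
  PowerSeries.coeff_mk _ _

theorem coeff_ofNat_mul {S : Type*} [CommSemiring S] (a d : ℕ) [a.AtLeastTwo] (f : PowerSeries S) :
    PowerSeries.coeff d ((ofNat(a) : PowerSeries S) * f) = ofNat(a) * PowerSeries.coeff d f := by
  rw [← map_ofNat (PowerSeries.C : S →+* PowerSeries S) a, PowerSeries.coeff_C_mul]

/-- The Picard–Fuchs operator `θ⁴ − 6q(2θ+1)²(3θ²+3θ+1) − 108q²(θ+1)²(2θ+1)(2θ+3)`. -/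
def picardFuchs (f : PowerSeries ℚ) : PowerSeries ℚ :=
  th^[4] f - 6 * PowerSeries.X * ((fun g => 2 * th g + g) ((fun g => 2 * th g + g)
    (3 * th^[2] f + 3 * th f + f))) - 108 * PowerSeries.X ^ 2 * ((fun g => th g + g)
    ((fun g => th g + g) ((fun g => 2 * th g + g) ((fun g => 2 * th g + 3 * g) f))))

theorem picardFuchs_mk_eq_zero {a : ℕ → ℚ} (hone : a 1 = 6 * a 0)
    (hadd_two : ∀ N : ℕ, (N + 2 : ℚ) ^ 4 * a (N + 2) =
      6 * (2 * N + 3 : ℚ) ^ 2 * (3 * (N + 1 : ℚ) ^ 2 + 3 * (N + 1) + 1) * a (N + 1) +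
        108 * (N + 1 : ℚ) ^ 2 * (2 * N + 1) * (2 * N + 3) * a N) :
    picardFuchs (PowerSeries.mk a) = 0 := by
  ext d
  simp only [picardFuchs, Function.iterate_succ, Function.iterate_zero, Function.comp_apply, id,
    mul_assoc]
  rcases d with _ | _ | N
  · simp only [map_sub, coeff_ofNat_mul, PowerSeries.coeff_zero_X_mul,
      PowerSeries.coeff_X_pow_mul', coeff_th]
    simp
  · simp only [map_sub, map_add, coeff_ofNat_mul, PowerSeries.coeff_succ_X_mul,
      PowerSeries.coeff_X_pow_mul', coeff_th, PowerSeries.coeff_mk]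
    simp [hone]
  · simp only [map_sub, map_add, coeff_ofNat_mul, pow_two, mul_assoc,
      PowerSeries.coeff_succ_X_mul, coeff_th, PowerSeries.coeff_mk, map_zero]
    push_cast
    linear_combination hadd_two N

theorem IsThreeTerm.factorial_mul {N : ℕ} {A : ℕ → ℚ}
    (h : IsThreeTerm (N + 2) (A (N + 2)) (A (N + 1)) (A N)) {a : ℕ → ℚ}
    (ha : ∀ d, a d = d.factorial * (2 * d).factorial * A d) :
    (N + 2 : ℚ) ^ 4 * a (N + 2) =
      6 * (2 * N + 3 : ℚ) ^ 2 * (3 * (N + 1 : ℚ) ^ 2 + 3 * (N + 1) + 1) * a (N + 1) +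
        108 * (N + 1 : ℚ) ^ 2 * (2 * N + 1) * (2 * N + 3) * a N := by
  rw [IsThreeTerm] at h
  simp only [ha, show 2 * (N + 2) = 2 * N + 1 + 1 + 1 + 1 by ring,
    show 2 * (N + 1) = 2 * N + 1 + 1 by ring, Nat.factorial_succ]
  push_cast
  linear_combination (4 * (N + 1 : ℚ) ^ 2 * (2 * N + 1) * (2 * N + 3) *
    N.factorial * (2 * N).factorial) * h

theorem alternant_rootFactor_zero : alternant (rootFactor 0) 0 5 1 = 1 := by
  simp [alternant_zero_of_apply_zero_eq_one rootFactor_zero]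

theorem alternant_rootFactor_one : alternant (rootFactor 1) 1 5 1 = 3 := by
  have h := isClosedForm_zero.succ.threeTerm
  rw [IsThreeTerm, alternant_rootFactor_zero] at h
  norm_num at h
  exact h

end PicardFuchs

/-- every `F_δ` is divisible by the Vandermonde `Δ`, and the series
`I₀ = Σ a_δ q^δ` with `a_δ = (F_δ/Δ)(0)` is annihilated by the stated
Picard–Fuchs operator. -/
theorem stmt_8 :
    (∀ δ : ℕ, ∃ G : R, F δ = Vand * G) ∧
    (∀ G : ℕ → R, (∀ δ : ℕ, F δ = Vand * G δ) →
      ∀ I₀ : PowerSeries ℚ,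
        I₀ = PowerSeries.mk (fun δ => MvPowerSeries.constantCoeff (G δ)) →
        th^[4] I₀ - 6 * PowerSeries.X * ((fun g => 2 * th g + g) ((fun g => 2 * th g + g) (3 * th^[2] I₀ + 3 * th I₀ + I₀))) - 108 * PowerSeries.X ^ 2 * ((fun g => th g + g) ((fun g => th g + g) ((fun g => 2 * th g + g) ((fun g => 2 * th g + 3 * g) (I₀))))) = 0) := by
  refine ⟨Vand_dvd_F, ?_⟩
  rintro G hG _ rfl
  have ha (d : ℕ) : MvPowerSeries.constantCoeff (G d) =
      d.factorial * (2 * d).factorial * alternant (rootFactor d) d 5 1 :=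
    constantCoeff_of_F_eq (hG d)
  refine picardFuchs_mk_eq_zero ?_ fun N => (isThreeTerm_alternant N).factorial_mul
    (A := fun d => alternant (rootFactor d) d 5 1) ha
  rw [ha 0, ha 1, alternant_rootFactor_zero, alternant_rootFactor_one]
  norm_num [Nat.factorial]

end Stmt8
end
end
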